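/- arXiv:1011.4888 — 2 statements merged into one kernel-verified Lean document; each statement's English description precedes it below -/
import Mathlib

section
/- Let P be a set of n points in general position in the plane with exactly one point w interior to the convex hull of P. Let Q consist of the edges of the boundary of the convex hull of P together with two edges uw and vw (u, v hull vertices) chosen so that the angle ∠uwv is maximal. Then every plane spanning tree of the complete geometric graph on P contains at least two edges of Q. -/
open Set EuclideanGeometry

/-- A plane (non-self-intersecting) spanning tree of the complete geometric graph on a
finite point set `P`. -/
def IsPlaneSpanningTree {P : Finset (EuclideanSpace ℝ (Fin 2))}
    (T : SimpleGraph ↥P) : Prop :=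
  T.IsTree ∧ ∀ a b x y : ↥P, T.Adj a b → T.Adj x y →
    a ≠ x → a ≠ y → b ≠ x → b ≠ y →
    openSegment ℝ (a : EuclideanSpace ℝ (Fin 2)) (b : EuclideanSpace ℝ (Fin 2)) ∩
      openSegment ℝ (x : EuclideanSpace ℝ (Fin 2)) (y : EuclideanSpace ℝ (Fin 2)) = ∅

/-- `ab` is an edge of the boundary of the convex hull of `P`. -/
def IsHullEdge (P : Finset (EuclideanSpace ℝ (Fin 2)))
    (a b : EuclideanSpace ℝ (Fin 2)) : Prop :=
  a ∈ P ∧ b ∈ P ∧ a ≠ b ∧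
    ∃ f : EuclideanSpace ℝ (Fin 2) →ₗ[ℝ] ℝ, f a = f b ∧
      ∀ p ∈ P, p ≠ a → p ≠ b → f p < f a

/-- An edge of the complete geometric graph belongs to the set `Q` consisting of the hull
boundary edges together with the two edges `uw` and `vw`. -/
def InQ (P : Finset (EuclideanSpace ℝ (Fin 2)))
    (u v w a b : EuclideanSpace ℝ (Fin 2)) : Prop :=
  IsHullEdge P a b ∨ s(a, b) = s(u, w) ∨ s(a, b) = s(v, w)

section Aux

/-- Orientation determinant of three points in the plane. -/
def cr (p q r : EuclideanSpace ℝ (Fin 2)) : ℝ :=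
  (q 0 - p 0) * (r 1 - p 1) - (q 1 - p 1) * (r 0 - p 0)

/-- Side of `p` relative to the line `ab`, positive on the side of `w`. -/
def sd (w a b p : EuclideanSpace ℝ (Fin 2)) : ℝ := cr a b p * cr a b w

lemma cr_left (a b : EuclideanSpace ℝ (Fin 2)) : cr a b a = 0 := by
  unfold cr; ring

lemma cr_right (a b : EuclideanSpace ℝ (Fin 2)) : cr a b b = 0 := by
  unfold cr; ring

lemma sd_left (w a b : EuclideanSpace ℝ (Fin 2)) : sd w a b a = 0 := by
  unfold sd cr; ring

lemma sd_right (w a b : EuclideanSpace ℝ (Fin 2)) : sd w a b b = 0 := by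
  unfold sd cr; ring

lemma ext2 {p q : EuclideanSpace ℝ (Fin 2)} (h0 : p 0 = q 0) (h1 : p 1 = q 1) : p = q := by
  ext i; fin_cases i <;> assumption

lemma collinear_of_cr {p q r : EuclideanSpace ℝ (Fin 2)} (hpq : p ≠ q) (h : cr p q r = 0) :
    Collinear ℝ ({p, q, r} : Set (EuclideanSpace ℝ (Fin 2))) := by
  rw [collinear_iff_of_mem (p₀ := p) (by simp)]
  refine ⟨q - p, ?_⟩
  unfold cr at h
  intro x hx
  simp only [Set.mem_insert_iff, Set.mem_singleton_iff] at hx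
  rcases hx with rfl | rfl | rfl
  · exact ⟨0, by simp⟩
  · exact ⟨1, by simp⟩
  · by_cases h0 : q 0 - p 0 = 0
    · have h1 : q 1 - p 1 ≠ 0 := by
        intro h1
        exact hpq (ext2 (by linarith) (by linarith))
      refine ⟨(x 1 - p 1) / (q 1 - p 1), ext2 ?_ ?_⟩
      · rw [h0] at h
        have : x 0 - p 0 = 0 := by
          rcases mul_eq_zero.1 (show (q 1 - p 1) * (x 0 - p 0) = 0 by linarith) with h' | h'
          · exact absurd h' h1
          · exact h'
        simp [h0]; linarith
      · simp; field_simp; ring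
    · refine ⟨(x 0 - p 0) / (q 0 - p 0), ext2 ?_ ?_⟩
      · simp; field_simp; ring
      · simp; field_simp; linarith

/-- Supporting functional at a point outside the interior. -/
lemma exists_support (P : Finset (EuclideanSpace ℝ (Fin 2)))
    (w : EuclideanSpace ℝ (Fin 2))
    (hwInt : w ∈ interior (convexHull ℝ (↑P : Set (EuclideanSpace ℝ (Fin 2)))))
    (a : EuclideanSpace ℝ (Fin 2))
    (ha : a ∉ interior (convexHull ℝ (↑P : Set (EuclideanSpace ℝ (Fin 2))))) :
    ∃ f0 f1 : ℝ, (∀ p ∈ P, f0 * p 0 + f1 * p 1 ≤ f0 * a 0 + f1 * a 1) ∧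
      f0 * w 0 + f1 * w 1 < f0 * a 0 + f1 * a 1 := by
  have hc : Convex ℝ (convexHull ℝ (↑P : Set (EuclideanSpace ℝ (Fin 2)))) := convex_convexHull _ _
  obtain ⟨f, hf⟩ := geometric_hahn_banach_open_point hc.interior isOpen_interior ha
  have key : ∀ p : EuclideanSpace ℝ (Fin 2), f p =
      f (EuclideanSpace.single 0 1) * p 0 + f (EuclideanSpace.single 1 1) * p 1 := by
    intro p
    have : p = p 0 • EuclideanSpace.single 0 (1:ℝ) + p 1 • EuclideanSpace.single 1 (1:ℝ) := by
      apply ext2 <;> simp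
    conv_lhs => rw [this]
    rw [map_add, map_smul, map_smul]
    simp [mul_comm]
  refine ⟨f (EuclideanSpace.single 0 1), f (EuclideanSpace.single 1 1), ?_, ?_⟩
  · intro p hp
    rw [← key, ← key]
    have hcl : p ∈ closure (interior (convexHull ℝ (↑P : Set (EuclideanSpace ℝ (Fin 2))))) := by
      rw [hc.closure_interior_eq_closure_of_nonempty_interior ⟨w, hwInt⟩]
      exact subset_closure (subset_convexHull ℝ _ hp)
    have hclosed : IsClosed {x : EuclideanSpace ℝ (Fin 2) | f x ≤ f a} :=
      isClosed_le f.continuous continuous_const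
    exact closure_minimal (fun x hx => (hf x hx).le) hclosed hcl
  · rw [← key, ← key]
    exact hf w hwInt

/-- Basic combinatorial-geometric hypotheses. -/
structure Cfg (P : Finset (EuclideanSpace ℝ (Fin 2))) (w : EuclideanSpace ℝ (Fin 2)) : Prop where
  wP : w ∈ P
  gen : ∀ p ∈ P, ∀ q ∈ P, ∀ r ∈ P, p ≠ q → q ≠ r → p ≠ r → cr p q r ≠ 0
  sup : ∀ a ∈ P, a ≠ w →
    ∃ f0 f1 : ℝ, (∀ p ∈ P, f0 * p 0 + f1 * p 1 ≤ f0 * a 0 + f1 * a 1) ∧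
      f0 * w 0 + f1 * w 1 < f0 * a 0 + f1 * a 1

variable {P : Finset (EuclideanSpace ℝ (Fin 2))} {w : EuclideanSpace ℝ (Fin 2)}

/-- Location of the crossing: half of the argument. -/
lemma Cfg.half (C : Cfg P w) {a b c d : EuclideanSpace ℝ (Fin 2)} (ha : a ∈ P) (hb : b ∈ P)
    (hc : c ∈ P) (hd : d ∈ P) (haw : a ≠ w) (hac : a ≠ c) (had : a ≠ d) (hcd : c ≠ d)
    {t l : ℝ} (ht0 : 0 < t) (ht1 : t < 1)
    (h0 : (1 - t) * c 0 + t * d 0 = (1 - l) * a 0 + l * b 0)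
    (h1 : (1 - t) * c 1 + t * d 1 = (1 - l) * a 1 + l * b 1) : 0 < l := by
  by_contra hl
  push Not at hl
  obtain ⟨f0, f1, hf, hfw⟩ := C.sup a ha haw
  have hfb := hf b hb
  have hfc := hf c hc
  have hfd := hf d hd
  have e : (1 - t) * (f0 * c 0 + f1 * c 1) + t * (f0 * d 0 + f1 * d 1)
      = (f0 * a 0 + f1 * a 1) + l * ((f0 * b 0 + f1 * b 1) - (f0 * a 0 + f1 * a 1)) := by
    linear_combination f0 * h0 + f1 * h1
  have e2 : 0 ≤ l * ((f0 * b 0 + f1 * b 1) - (f0 * a 0 + f1 * a 1)) :=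
    mul_nonneg_of_nonpos_of_nonpos hl (by linarith)
  have ec : f0 * c 0 + f1 * c 1 = f0 * a 0 + f1 * a 1 := by
    nlinarith
  have ed : f0 * d 0 + f1 * d 1 = f0 * a 0 + f1 * a 1 := by
    nlinarith
  have hg := C.gen a ha c hc d hd hac hcd had
  have z0 : f0 * cr a c d = 0 := by
    unfold cr
    linear_combination (d 1 - a 1) * ec - (c 1 - a 1) * ed
  have z1 : f1 * cr a c d = 0 := by
    unfold cr
    linear_combination (c 0 - a 0) * ed - (d 0 - a 0) * ec
  have y0 : f0 = 0 := by simpa [hg] using z0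
  have y1 : f1 = 0 := by simpa [hg] using z1
  simp [y0, y1] at hfw

/-- Points strictly on opposite sides of a line spanned by two hull vertices:
the open segments cross. -/
lemma Cfg.cross (C : Cfg P w) {a b c d : EuclideanSpace ℝ (Fin 2)} (ha : a ∈ P) (hb : b ∈ P)
    (hc : c ∈ P) (hd : d ∈ P) (haw : a ≠ w) (hbw : b ≠ w) (hab : a ≠ b)
    (h : cr a b c * cr a b d < 0) :
    ∃ t l : ℝ, 0 < t ∧ t < 1 ∧ 0 < l ∧ l < 1 ∧
      (∀ i, (1 - t) * c i + t * d i = (1 - l) * a i + l * b i) := by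
  have hac : a ≠ c := by rintro rfl; simp [cr_left] at h
  have had : a ≠ d := by rintro rfl; simp [cr_left] at h
  have hbc : b ≠ c := by rintro rfl; simp [cr_right] at h
  have hbd : b ≠ d := by rintro rfl; simp [cr_right] at h
  have hcd : c ≠ d := by rintro rfl; nlinarith [mul_self_nonneg (cr a b c)]
  have hne : cr a b c - cr a b d ≠ 0 := by
    intro h'
    have : cr a b c = cr a b d := by linarith
    rw [this] at h; nlinarith [mul_self_nonneg (cr a b d)]
  set t := cr a b c / (cr a b c - cr a b d) with ht
  have ht0 : 0 < t := by
    rw [ht]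
    rcases mul_neg_iff.1 h with ⟨h1, h2⟩ | ⟨h1, h2⟩
    · exact div_pos h1 (by linarith)
    · exact div_pos_of_neg_of_neg h1 (by linarith)
  have ht1 : t < 1 := by
    have : 1 - t = (- cr a b d) / (cr a b c - cr a b d) := by
      rw [ht]; field_simp; ring
    have h3 : 0 < 1 - t := by
      rw [this]
      rcases mul_neg_iff.1 h with ⟨h1, h2⟩ | ⟨h1, h2⟩
      · exact div_pos (by linarith) (by linarith)
      · exact div_pos_of_neg_of_neg (by linarith) (by linarith)
    linarith
  have hz : (1 - t) * cr a b c + t * cr a b d = 0 := by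
    rw [ht]; field_simp; ring
  have hz' : (b 0 - a 0) * ((1 - t) * c 1 + t * d 1 - a 1)
      - (b 1 - a 1) * ((1 - t) * c 0 + t * d 0 - a 0) = 0 := by
    rw [← hz]; unfold cr; ring
  obtain ⟨l, hl⟩ : ∃ l : ℝ, ∀ i, (1 - t) * c i + t * d i = (1 - l) * a i + l * b i := by
    by_cases h0 : b 0 - a 0 = 0
    · have h1 : b 1 - a 1 ≠ 0 := by
        intro h1
        exact hab (ext2 (by linarith) (by linarith))
      refine ⟨((1 - t) * c 1 + t * d 1 - a 1) / (b 1 - a 1), ?_⟩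
      have : (1 - t) * c 0 + t * d 0 - a 0 = 0 := by
        rw [h0] at hz'
        rcases mul_eq_zero.1 (show (b 1 - a 1) * ((1 - t) * c 0 + t * d 0 - a 0) = 0 by
          linarith) with h' | h'
        · exact absurd h' h1
        · exact h'
      rw [Fin.forall_fin_two]
      constructor
      · linear_combination this - ((1 - t) * c 1 + t * d 1 - a 1) / (b 1 - a 1) * h0
      · generalize (1 - t) * c 1 + t * d 1 = X
        field_simp; ring
    · refine ⟨((1 - t) * c 0 + t * d 0 - a 0) / (b 0 - a 0), ?_⟩
      rw [Fin.forall_fin_two]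
      constructor
      · generalize (1 - t) * c 0 + t * d 0 = X
        field_simp; ring
      · generalize (1 - t) * c 0 + t * d 0 = X at *
        generalize (1 - t) * c 1 + t * d 1 = Y at *
        field_simp; linarith
  refine ⟨t, l, ht0, ht1, ?_, ?_, hl⟩
  · exact C.half ha hb hc hd haw hac had hcd ht0 ht1 (hl 0) (hl 1)
  · have := C.half (l := 1 - l) hb ha hc hd hbw hbc hbd hcd ht0 ht1
      (by rw [hl 0]; ring) (by rw [hl 1]; ring)
    linarith

lemma cr_affine {a b p q r s : EuclideanSpace ℝ (Fin 2)} {t l : ℝ}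
    (h : ∀ i, (1 - t) * p i + t * q i = (1 - l) * r i + l * s i) :
    (1 - t) * cr a b p + t * cr a b q = (1 - l) * cr a b r + l * cr a b s := by
  unfold cr
  linear_combination (b 0 - a 0) * h 1 - (b 1 - a 1) * h 0

lemma sd_affine {a b p q r s : EuclideanSpace ℝ (Fin 2)} {t l : ℝ}
    (h : ∀ i, (1 - t) * p i + t * q i = (1 - l) * r i + l * s i) :
    (1 - t) * sd w a b p + t * sd w a b q = (1 - l) * sd w a b r + l * sd w a b s := by
  unfold sd
  linear_combination (cr a b w) * cr_affine (a := a) (b := b) h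

lemma Cfg.sd_w (C : Cfg P w) {a b : EuclideanSpace ℝ (Fin 2)} (ha : a ∈ P) (hb : b ∈ P)
    (haw : a ≠ w) (hbw : b ≠ w) (hab : a ≠ b) : 0 < sd w a b w :=
  mul_self_pos.2 (C.gen a ha b hb w C.wP hab hbw haw)

lemma Cfg.sd_zero (C : Cfg P w) {a b p : EuclideanSpace ℝ (Fin 2)} (ha : a ∈ P) (hb : b ∈ P)
    (hp : p ∈ P)
    (haw : a ≠ w) (hbw : b ≠ w) (hab : a ≠ b) (h : sd w a b p = 0) : p = a ∨ p = b := by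
  by_contra hh
  push Not at hh
  exact mul_ne_zero (C.gen a ha b hb p hp hab hh.2.symm hh.1.symm)
    (C.gen a ha b hb w C.wP hab hbw haw) h

lemma Cfg.sd_cross (C : Cfg P w) {a b c d : EuclideanSpace ℝ (Fin 2)} (ha : a ∈ P) (hb : b ∈ P)
    (hc : c ∈ P) (hd : d ∈ P) (haw : a ≠ w) (hbw : b ≠ w) (hab : a ≠ b)
    (h : sd w a b c < 0) (h' : 0 < sd w a b d) :
    ∃ t l : ℝ, 0 < t ∧ t < 1 ∧ 0 < l ∧ l < 1 ∧
      (∀ i, (1 - t) * c i + t * d i = (1 - l) * a i + l * b i) := by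
  apply C.cross ha hb hc hd haw hbw hab
  have h1 := mul_neg_of_neg_of_pos h h'
  unfold sd at h1
  by_contra h2
  push Not at h2
  nlinarith [mul_nonneg h2 (mul_self_nonneg (cr a b w))]

/-- Nestedness of the caps. -/
lemma Cfg.sub (C : Cfg P w) {a b c d p : EuclideanSpace ℝ (Fin 2)} (ha : a ∈ P) (hb : b ∈ P)
    (hc : c ∈ P) (hd : d ∈ P) (hp : p ∈ P) (haw : a ≠ w) (hbw : b ≠ w) (hab : a ≠ b)
    (hcw : c ≠ w) (hdw : d ≠ w) (hcd : c ≠ d)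
    (h1 : sd w a b c ≤ 0) (h2 : sd w a b d ≤ 0) (h : sd w c d p < 0) : sd w a b p < 0 := by
  obtain ⟨t, l, ht0, ht1, hl0, hl1, e⟩ :=
    C.sd_cross hc hd hp C.wP hcw hdw hcd h (C.sd_w hc hd hcw hdw hcd)
  have := sd_affine (w := w) (a := a) (b := b) e
  have hw := C.sd_w ha hb haw hbw hab
  by_contra hh
  push Not at hh
  nlinarith [mul_nonneg (sub_pos.2 ht1).le hh, mul_pos ht0 hw,
    mul_nonneg (sub_pos.2 hl1).le (neg_nonneg.2 h1), mul_nonneg hl0.le (neg_nonneg.2 h2)]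

lemma hullEdge_of (C : Cfg P w) {a b : EuclideanSpace ℝ (Fin 2)} (ha : a ∈ P) (hb : b ∈ P)
    (haw : a ≠ w) (hbw : b ≠ w) (hab : a ≠ b) (h : ∀ p ∈ P, 0 ≤ sd w a b p) :
    IsHullEdge P a b := by
  refine ⟨ha, hb, hab, ?_⟩
  let f : EuclideanSpace ℝ (Fin 2) →ₗ[ℝ] ℝ :=
    { toFun := fun p => (- cr a b w) * ((b 0 - a 0) * p 1 - (b 1 - a 1) * p 0)
      map_add' := by intro x y; simp; ring
      map_smul' := by intro m x; simp; ring }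
  have hf : ∀ p, f p = (- cr a b w) * ((b 0 - a 0) * p 1 - (b 1 - a 1) * p 0) := fun p => rfl
  have key : ∀ p, f p = f a - sd w a b p := by
    intro p
    rw [hf, hf]
    simp only [sd]
    have : cr a b p = (b 0 - a 0) * (p 1 - a 1) - (b 1 - a 1) * (p 0 - a 0) := rfl
    rw [this]; ring
  refine ⟨f, ?_, ?_⟩
  · rw [key b, sd_right]; ring
  · intro p hp hpa hpb
    have h0 := h p hp
    have : sd w a b p ≠ 0 := fun hz => by
      rcases C.sd_zero ha hb hp haw hbw hab hz with h' | h'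
      · exact hpa h'
      · exact hpb h'
    have : 0 < sd w a b p := lt_of_le_of_ne h0 this.symm
    rw [key p]; linarith

lemma angle_mono {V : Type*} [NormedAddCommGroup V] [InnerProductSpace ℝ V] {U B : V} {p q : ℝ}
    (hU : U ≠ 0) (hB : B ≠ 0) (hV : p • U + q • B ≠ 0) (hp : 0 ≤ p) (hq : 0 ≤ q) :
    InnerProductGeometry.angle U (p • U + q • B) ≤ InnerProductGeometry.angle U B ∧
    (0 < p → |inner ℝ U B| < ‖U‖ * ‖B‖ →
      InnerProductGeometry.angle U (p • U + q • B) < InnerProductGeometry.angle U B) := by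
  have hU' := norm_pos_iff.2 hU
  have hB' := norm_pos_iff.2 hB
  have hV' := norm_pos_iff.2 hV
  have n1 : ‖p • U + q • B‖ ≤ p * ‖U‖ + q * ‖B‖ := by
    refine (norm_add_le _ _).trans ?_
    rw [norm_smul, norm_smul, Real.norm_of_nonneg hp, Real.norm_of_nonneg hq]
  have n2 : q * ‖B‖ - p * ‖U‖ ≤ ‖p • U + q • B‖ := by
    have := norm_sub_le (p • U + q • B) (p • U)
    rw [add_sub_cancel_left, norm_smul, norm_smul, Real.norm_of_nonneg hp,
      Real.norm_of_nonneg hq] at this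
    linarith
  have hi : inner ℝ U (p • U + q • B) = p * (‖U‖ * ‖U‖) + q * inner ℝ U B := by
    rw [inner_add_right, inner_smul_right, inner_smul_right, real_inner_self_eq_norm_mul_norm]
  -- the key estimate
  have key : p * ‖U‖ * (‖U‖ * ‖B‖ - |inner ℝ U B|) ≤
      inner ℝ U (p • U + q • B) * ‖B‖ - inner ℝ U B * ‖p • U + q • B‖ := by
    rw [hi]
    rcases le_or_gt 0 (inner ℝ U B) with h | h
    · rw [abs_of_nonneg h]
      nlinarith [mul_le_mul_of_nonneg_left n1 h]
    · rw [abs_of_neg h]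
      nlinarith [mul_le_mul_of_nonneg_left n2 (neg_pos.2 h).le]
  have cs := abs_real_inner_le_norm U B
  constructor
  · unfold InnerProductGeometry.angle
    apply Real.arccos_le_arccos
    rw [div_le_div_iff₀ (by positivity) (by positivity)]
    have : 0 ≤ p * ‖U‖ * (‖U‖ * ‖B‖ - |inner ℝ U B|) :=
      mul_nonneg (by positivity) (by linarith)
    nlinarith
  · intro hp0 hlt
    unfold InnerProductGeometry.angle
    have : 0 < p * ‖U‖ * (‖U‖ * ‖B‖ - |inner ℝ U B|) :=
      mul_pos (by positivity) (by linarith)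
    apply Real.arccos_lt_arccos
    · rw [le_div_iff₀ (by positivity)]
      linarith [neg_abs_le (inner ℝ U B)]
    · rw [div_lt_div_iff₀ (by positivity) (by positivity)]
      nlinarith
    · rw [div_le_iff₀ (by positivity)]
      linarith [le_abs_self (inner ℝ U (p • U + q • B)),
        abs_real_inner_le_norm U (p • U + q • B)]

/-- Two vectors in the half-open cone spanned by `A`, `B` make a smaller angle. -/
lemma angle_cone {V : Type*} [NormedAddCommGroup V] [InnerProductSpace ℝ V] {A B : V}
    (hA : A ≠ 0) (hB : B ≠ 0) (hlt : |inner ℝ A B| < ‖A‖ * ‖B‖) {x1 y1 x2 y2 : ℝ}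
    (hx1 : 0 ≤ x1) (hx2 : 0 ≤ x2) (hy1 : 0 < y1) (hy2 : 0 < y2)
    (hU : x1 • A + y1 • B ≠ 0) (hV : x2 • A + y2 • B ≠ 0) :
    InnerProductGeometry.angle (x1 • A + y1 • B) (x2 • A + y2 • B) <
      InnerProductGeometry.angle A B := by
  wlog h : x2 * y1 ≤ x1 * y2 generalizing x1 x2 y1 y2
  · rw [InnerProductGeometry.angle_comm]
    exact this hx2 hx1 hy2 hy1 hV hU (by linarith)
  have e : ∃ p q : ℝ, 0 ≤ p ∧ 0 ≤ q ∧
      x2 • A + y2 • B = p • (x1 • A + y1 • B) + q • B := by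
    rcases hx1.eq_or_lt with h0 | h0
    · refine ⟨y2 / y1, 0, by positivity, le_rfl, ?_⟩
      have : x2 = 0 := by
        rw [← h0] at h
        nlinarith
      rw [← h0, this]
      simp only [zero_smul, zero_add, add_zero, smul_smul]
      congr 1; field_simp
    · refine ⟨x2 / x1, y2 - x2 / x1 * y1, by positivity, ?_, ?_⟩
      · rw [sub_nonneg, div_mul_eq_mul_div, div_le_iff₀ h0]; linarith
      · have : x2 = x2 / x1 * x1 := by field_simp
        rw [smul_add, smul_smul, smul_smul, ← this, sub_smul]
        abel
  obtain ⟨p, q, hp, hq, e⟩ := e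
  have h1 : InnerProductGeometry.angle (x1 • A + y1 • B) (x2 • A + y2 • B) ≤
      InnerProductGeometry.angle (x1 • A + y1 • B) B := by
    rw [e] at hV ⊢
    exact (angle_mono hU hB hV hp hq).1
  refine h1.trans_lt ?_
  rw [InnerProductGeometry.angle_comm, InnerProductGeometry.angle_comm A B]
  rw [add_comm] at hU ⊢
  exact (angle_mono hB hA hU hy1.le hx1).2 hy1 (by rw [real_inner_comm, mul_comm]; exact hlt)

end Aux

section Tree

variable {P : Finset (EuclideanSpace ℝ (Fin 2))} {w : EuclideanSpace ℝ (Fin 2)}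
  {T : SimpleGraph ↥P}

lemma nc (C : Cfg P w) (hT : IsPlaneSpanningTree T) {a b c d : ↥P} (hab : T.Adj a b)
    (hcd : T.Adj c d) (haw : (a : EuclideanSpace ℝ (Fin 2)) ≠ w)
    (hbw : (b : EuclideanSpace ℝ (Fin 2)) ≠ w)
    (h : sd w a b c < 0) (h' : 0 < sd w a b d) : False := by
  have hab' : (a : EuclideanSpace ℝ (Fin 2)) ≠ b := fun e => hab.ne (Subtype.ext e)
  obtain ⟨t, l, ht0, ht1, hl0, hl1, e⟩ :=
    C.sd_cross a.2 b.2 c.2 d.2 haw hbw hab' h h'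
  have hac : a ≠ c := by rintro rfl; simp [sd_left] at h
  have had : a ≠ d := by rintro rfl; simp [sd_left] at h'
  have hbc : b ≠ c := by rintro rfl; simp [sd_right] at h
  have hbd : b ≠ d := by rintro rfl; simp [sd_right] at h'
  have := hT.2 a b c d hab hcd hac had hbc hbd
  rw [Set.eq_empty_iff_forall_notMem] at this
  apply this ((1 - l) • (a : EuclideanSpace ℝ (Fin 2)) + l • (b : EuclideanSpace ℝ (Fin 2)))
  refine ⟨⟨1 - l, l, by linarith, hl0, by ring, rfl⟩, 1 - t, t, by linarith, ht0, by ring, ?_⟩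
  apply ext2
  · simpa using e 0
  · simpa using e 1

lemma cut (hT : T.Connected) (A : Set ↥P) {x y : ↥P} (hx : x ∈ A) (hy : y ∉ A) :
    ∃ p q, T.Adj p q ∧ p ∈ A ∧ q ∉ A := by
  obtain ⟨W⟩ := hT.preconnected x y
  obtain ⟨d, -, h1, h2⟩ := W.exists_boundary_dart A hx hy
  exact ⟨d.fst, d.snd, d.adj, h1, h2⟩

/-- The cap cut off by `ab`. -/
noncomputable def cap (P : Finset (EuclideanSpace ℝ (Fin 2))) (w a b : EuclideanSpace ℝ (Fin 2)) :
    Finset (EuclideanSpace ℝ (Fin 2)) := P.filter (fun p => sd w a b p < 0)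

lemma exists_good (C : Cfg P w) (hT : IsPlaneSpanningTree T) : ∀ (n : ℕ) (a b : ↥P), T.Adj a b →
    (a : EuclideanSpace ℝ (Fin 2)) ≠ w → (b : EuclideanSpace ℝ (Fin 2)) ≠ w →
    (cap P w a b).card = n →
    ∃ c d : ↥P, T.Adj c d ∧ (c : EuclideanSpace ℝ (Fin 2)) ≠ w ∧
      (d : EuclideanSpace ℝ (Fin 2)) ≠ w ∧ IsHullEdge P c d ∧
      sd w a b c ≤ 0 ∧ sd w a b d ≤ 0 := by
  intro n
  induction n using Nat.strong_induction_on with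
  | _ n ih =>
  intro a b hab haw hbw hn
  have hab' : (a : EuclideanSpace ℝ (Fin 2)) ≠ b := fun e => hab.ne (Subtype.ext e)
  by_cases hS : ∀ p ∈ P, 0 ≤ sd w a b p
  · exact ⟨a, b, hab, haw, hbw, hullEdge_of C a.2 b.2 haw hbw hab' hS,
      (sd_left _ _ _).le, (sd_right _ _ _).le⟩
  push Not at hS
  obtain ⟨c, hcP, hc⟩ := hS
  have hww := C.sd_w a.2 b.2 haw hbw hab'
  have hcw : c ≠ w := by rintro rfl; linarith
  obtain ⟨c', d, hcd, hc', -⟩ := cut hT.1.connected {(⟨c, hcP⟩ : ↥P)} (x := ⟨c, hcP⟩) (y := a)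
    rfl (by
      intro h
      have : (a : EuclideanSpace ℝ (Fin 2)) = c := congrArg Subtype.val h
      rw [← this, sd_left] at hc
      exact lt_irrefl _ hc)
  rw [Set.mem_singleton_iff] at hc'
  subst hc'
  have hd : sd w a b d ≤ 0 := by
    by_contra hh
    push Not at hh
    exact nc C hT hab hcd haw hbw hc hh
  have hdw : (d : EuclideanSpace ℝ (Fin 2)) ≠ w := by
    intro h; rw [h] at hd; linarith
  have hcd' : c ≠ d := fun e => hcd.ne (Subtype.ext e)
  have hlt : (cap P w c d).card < n := by
    rw [← hn]
    apply Finset.card_lt_card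
    rw [Finset.ssubset_iff_of_subset]
    · refine ⟨c, by simp [cap, hcP, hc], by simp [cap, sd_left]⟩
    · intro p hp
      simp only [cap, Finset.mem_filter] at hp ⊢
      exact ⟨hp.1, C.sub a.2 b.2 hcP d.2 hp.1 haw hbw hab' hcw hdw hcd' hc.le hd hp.2⟩
  obtain ⟨e, f, hef, hew, hfw, hH, h1, h2⟩ := ih _ hlt _ _ hcd hcw hdw rfl
  have tr : ∀ p ∈ P, sd w c d p ≤ 0 → sd w a b p ≤ 0 := by
    intro p hp h
    rcases h.lt_or_eq with h | h
    · exact (C.sub a.2 b.2 hcP d.2 hp haw hbw hab' hcw hdw hcd' hc.le hd h).le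
    · rcases C.sd_zero hcP d.2 hp hcw hdw hcd' h with h | h
      · rw [h]; exact hc.le
      · rw [h]; exact hd
  exact ⟨e, f, hef, hew, hfw, hH, tr _ e.2 h1, tr _ f.2 h2⟩

/-- A hull edge lying in two different caps that are not nested gives a contradiction. -/
lemma no_common (C : Cfg P w) {a b x y c : EuclideanSpace ℝ (Fin 2)}
    (ha : a ∈ P) (hb : b ∈ P) (hx : x ∈ P) (hy : y ∈ P) (hc : c ∈ P)
    (haw : a ≠ w) (hbw : b ≠ w) (hab : a ≠ b) (hxw : x ≠ w) (hyw : y ≠ w) (hxy : x ≠ y)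
    (hxs : 0 < sd w a b x) (hys : 0 ≤ sd w a b y)
    (has : 0 ≤ sd w x y a) (hbs : 0 ≤ sd w x y b)
    (h1 : sd w a b c ≤ 0) (h2 : sd w x y c ≤ 0) : c = y := by
  have hcx : c ≠ x := by rintro rfl; linarith
  rcases h2.lt_or_eq with h2 | h2
  swap
  · rcases C.sd_zero hx hy hc hxw hyw hxy h2 with h | h
    · exact absurd h hcx
    · exact h
  rcases h1.lt_or_eq with h1 | h1
  swap
  · rcases C.sd_zero ha hb hc haw hbw hab h1 with h | h <;> subst h <;> linarith
  exfalso
  have hw1 := C.sd_w ha hb haw hbw hab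
  have hw2 := C.sd_w hx hy hxw hyw hxy
  obtain ⟨t, l, ht0, ht1, hl0, hl1, e⟩ := C.sd_cross ha hb hc C.wP haw hbw hab h1 hw1
  obtain ⟨s, m, hs0, hs1, hm0, hm1, e'⟩ := C.sd_cross hx hy hc C.wP hxw hyw hxy h2 hw2
  have k1 := sd_affine (w := w) (a := a) (b := b) e
  have k2 := sd_affine (w := w) (a := x) (b := y) e
  have k3 := sd_affine (w := w) (a := a) (b := b) e'
  have k4 := sd_affine (w := w) (a := x) (b := y) e'
  simp only [sd_left, sd_right, mul_zero, add_zero] at k1 k4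
  have p2 : 0 ≤ (1 - l) * sd w x y a + l * sd w x y b :=
    add_nonneg (mul_nonneg (by linarith) has) (mul_nonneg hl0.le hbs)
  have p3 : 0 < (1 - m) * sd w a b x + m * sd w a b y :=
    add_pos_of_pos_of_nonneg (mul_pos (by linarith) hxs) (mul_nonneg hm0.le hys)
  rw [← k3] at p3
  rw [← k2] at p2
  -- on the segment from c to w the parameter `s` is larger than `t`, and conversely
  have q1 : t < s := by
    by_contra hh
    push Not at hh
    nlinarith [mul_nonneg (sub_nonneg.2 hh) (sub_pos.2 (h1.trans hw1)).le]
  have q2 : s ≤ t := by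
    by_contra hh
    push Not at hh
    nlinarith [mul_pos (sub_pos.2 hh) (sub_pos.2 (h2.trans hw2))]
  linarith

lemma cone_coords (C : Cfg P w) {a b p : EuclideanSpace ℝ (Fin 2)}
    (ha : a ∈ P) (hb : b ∈ P) (hp : p ∈ P) (haw : a ≠ w) (hbw : b ≠ w) (hab : a ≠ b)
    (hpa : p ≠ a) (h : sd w a b p ≤ 0) :
    ∃ x y : ℝ, 0 ≤ x ∧ 0 < y ∧ p - w = x • (a - w) + y • (b - w) := by
  rcases h.lt_or_eq with h | h
  · obtain ⟨t, l, ht0, ht1, hl0, hl1, e⟩ :=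
      C.sd_cross ha hb hp C.wP haw hbw hab h (C.sd_w ha hb haw hbw hab)
    have ht : 0 < 1 - t := by linarith
    have hl : 0 < 1 - l := by linarith
    have key : ∀ i, p i - w i = (1 - l) / (1 - t) * (a i - w i) + l / (1 - t) * (b i - w i) := by
      intro i
      have := e i
      field_simp
      linarith
    refine ⟨(1 - l) / (1 - t), l / (1 - t), by positivity, by positivity, ext2 ?_ ?_⟩
    · simpa using key 0
    · simpa using key 1
  · rcases C.sd_zero ha hb hp haw hbw hab h with h | h
    · exact absurd h hpa
    · exact ⟨0, 1, le_rfl, one_pos, by simp [h]⟩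

lemma angle_lt (C : Cfg P w) {a b u v : EuclideanSpace ℝ (Fin 2)}
    (ha : a ∈ P) (hb : b ∈ P) (hu : u ∈ P) (hv : v ∈ P) (haw : a ≠ w) (hbw : b ≠ w)
    (hab : a ≠ b) (huw : u ≠ w) (hvw : v ≠ w)
    (hua : u ≠ a) (hva : v ≠ a) (h : sd w a b u ≤ 0) (h' : sd w a b v ≤ 0) :
    ∠ u w v < ∠ a w b := by
  obtain ⟨x1, y1, hx1, hy1, e1⟩ := cone_coords C ha hb hu haw hbw hab hua h
  obtain ⟨x2, y2, hx2, hy2, e2⟩ := cone_coords C ha hb hv haw hbw hab hva h'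
  unfold EuclideanGeometry.angle
  simp only [vsub_eq_sub]
  have hU := sub_ne_zero.2 huw
  have hV := sub_ne_zero.2 hvw
  rw [e1] at hU ⊢
  rw [e2] at hV ⊢
  refine angle_cone (sub_ne_zero.2 haw) (sub_ne_zero.2 hbw) ?_ hx1 hx2 hy1 hy2 hU hV
  apply lt_of_le_of_ne (abs_real_inner_le_norm _ _)
  intro heq
  have hg := C.gen w C.wP a ha b hb haw.symm hab hbw.symm
  have hsq : (inner ℝ (a - w) (b - w)) ^ 2 = ‖a - w‖ ^ 2 * ‖b - w‖ ^ 2 := by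
    rw [← sq_abs, heq]; ring
  rw [EuclideanSpace.real_norm_sq_eq, EuclideanSpace.real_norm_sq_eq] at hsq
  simp only [PiLp.inner_apply, Fin.sum_univ_two, PiLp.sub_apply, RCLike.inner_apply,
    conj_trivial] at hsq
  apply hg
  have : cr w a b ^ 2 = 0 := by
    unfold cr
    linear_combination -hsq
  exact pow_eq_zero_iff (two_ne_zero) |>.1 this

end Tree

/-- if `P` is a set of points in general position with exactly one point `w`
interior to the convex hull, and `Q` consists of the hull boundary edges together with two
edges `uw`, `vw` maximizing the angle `∠ u w v`, then every plane spanning tree of the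
complete geometric graph on `P` contains at least two edges of `Q`. -/
theorem plane_tree_two_edges_in_Q (P : Finset (EuclideanSpace ℝ (Fin 2)))
    (hgen : ∀ p ∈ P, ∀ q ∈ P, ∀ r ∈ P, p ≠ q → q ≠ r → p ≠ r →
      ¬ Collinear ℝ ({p, q, r} : Set (EuclideanSpace ℝ (Fin 2))))
    (w : EuclideanSpace ℝ (Fin 2)) (hwP : w ∈ P)
    (hwInt : w ∈ interior (convexHull ℝ (↑P : Set (EuclideanSpace ℝ (Fin 2)))))
    (hwUnique : ∀ p ∈ P, p ≠ w →
      p ∉ interior (convexHull ℝ (↑P : Set (EuclideanSpace ℝ (Fin 2)))))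
    (u v : EuclideanSpace ℝ (Fin 2)) (huP : u ∈ P) (hvP : v ∈ P)
    (huw : u ≠ w) (hvw : v ≠ w) (huv : u ≠ v)
    (hmax : ∀ u' ∈ P, ∀ v' ∈ P, u' ≠ w → v' ≠ w → ∠ u' w v' ≤ ∠ u w v)
    (T : SimpleGraph ↥P) (hT : IsPlaneSpanningTree T) :
    ∃ a b x y : ↥P, T.Adj a b ∧ T.Adj x y ∧ s(a, b) ≠ s(x, y) ∧
      InQ P u v w a b ∧ InQ P u v w x y := by
  by_contra hcon
  push Not at hcon
  have hQ : ∀ a b x y : ↥P, T.Adj a b → T.Adj x y → InQ P u v w a b → InQ P u v w x y →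
      s(a, b) = s(x, y) := by
    intro a b x y h1 h2 h3 h4
    by_contra h5
    exact hcon a b x y h1 h2 h5 h3 h4
  clear hcon
  have C : Cfg P w :=
    { wP := hwP
      gen := fun p hp q hq r hr h1 h2 h3 h => hgen p hp q hq r hr h1 h2 h3 (collinear_of_cr h1 h)
      sup := fun a ha haw => exists_support P w hwInt a (hwUnique a ha haw) }
  have hconn := hT.1.connected
  -- a vertex all of whose edges go to `w` is adjacent to `w`
  have leaf : ∀ x : ↥P, (x : EuclideanSpace ℝ (Fin 2)) ≠ w →
      (∀ y : ↥P, T.Adj x y → (y : EuclideanSpace ℝ (Fin 2)) = w) → T.Adj x ⟨w, hwP⟩ := by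
    intro x hxw hx
    obtain ⟨p, q, hpq, hp, -⟩ := cut hconn {x} (x := x) (y := ⟨w, hwP⟩) rfl
      (fun h => hxw (congrArg Subtype.val h).symm)
    rw [Set.mem_singleton_iff] at hp
    subst hp
    have : q = ⟨w, hwP⟩ := Subtype.ext (hx q hpq)
    rwa [this] at hpq
  let Ed : Finset (↥P × ↥P) := by
    classical exact Finset.univ.filter (fun e => T.Adj e.1 e.2 ∧
      (e.1 : EuclideanSpace ℝ (Fin 2)) ≠ w ∧ (e.2 : EuclideanSpace ℝ (Fin 2)) ≠ w)
  have hEd : ∀ e, e ∈ Ed ↔ T.Adj e.1 e.2 ∧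
      (e.1 : EuclideanSpace ℝ (Fin 2)) ≠ w ∧ (e.2 : EuclideanSpace ℝ (Fin 2)) ≠ w := by
    intro e; simp [Ed]
  rcases Ed.eq_empty_or_nonempty with hE | hE
  · have hall : ∀ x : ↥P, (x : EuclideanSpace ℝ (Fin 2)) ≠ w → T.Adj x ⟨w, hwP⟩ := by
      intro x hx
      apply leaf x hx
      intro y hxy
      by_contra hy
      have : (x, y) ∈ Ed := (hEd _).2 ⟨hxy, hx, hy⟩
      rw [hE] at this
      simp at this
    have h1 := hQ ⟨u, huP⟩ ⟨w, hwP⟩ ⟨v, hvP⟩ ⟨w, hwP⟩ (hall _ huw) (hall _ hvw)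
      (Or.inr (Or.inl rfl)) (Or.inr (Or.inr rfl))
    rw [Sym2.eq_iff] at h1
    simp only [Subtype.mk.injEq] at h1
    rcases h1 with h | h
    · exact huv h.1
    · exact huw h.1
  obtain ⟨⟨a, b⟩, habE, hmaxE⟩ := Ed.exists_max_image (fun e => (cap P w e.1 e.2).card) hE
  obtain ⟨hab, haw, hbw⟩ := (hEd _).1 habE
  simp only at hab haw hbw hmaxE
  have hab' : (a : EuclideanSpace ℝ (Fin 2)) ≠ b := fun e => hab.ne (Subtype.ext e)
  have hww := C.sd_w a.2 b.2 haw hbw hab'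
  obtain ⟨c, d, hcd, hcw, hdw, hH, hc, hd⟩ := exists_good C hT _ a b hab haw hbw rfl
  have hcd' : (c : EuclideanSpace ℝ (Fin 2)) ≠ d := fun e => hcd.ne (Subtype.ext e)
  -- every edge with an endpoint strictly on the side of `w` is incident to `w`
  have claim : ∀ x y : ↥P, T.Adj x y → (x : EuclideanSpace ℝ (Fin 2)) ≠ w →
      0 < sd w a b x → (y : EuclideanSpace ℝ (Fin 2)) = w := by
    intro x y hxy hxw hxs
    by_contra hyw
    have hxy' : (x : EuclideanSpace ℝ (Fin 2)) ≠ y := fun e => hxy.ne (Subtype.ext e)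
    have hys : 0 ≤ sd w a b y := by
      by_contra hh
      push Not at hh
      exact nc C hT hab hxy.symm haw hbw hh hxs
    obtain ⟨e, f, hef, hew, hfw, hH', he, hf⟩ := exists_good C hT _ x y hxy hxw hyw rfl
    have heq := hQ c d e f hcd hef (Or.inl hH) (Or.inl hH')
    have hce : sd w x y c ≤ 0 ∧ sd w x y d ≤ 0 := by
      rw [Sym2.eq_iff] at heq
      rcases heq with ⟨rfl, rfl⟩ | ⟨rfl, rfl⟩
      · exact ⟨he, hf⟩
      · exact ⟨hf, he⟩
    have notbig : ¬ (sd w x y a ≤ 0 ∧ sd w x y b ≤ 0) := by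
      rintro ⟨h1, h2⟩
      have hle := hmaxE (x, y) ((hEd _).2 ⟨hxy, hxw, hyw⟩)
      simp only at hle
      have hlt : (cap P w a b).card < (cap P w x y).card := by
        apply Finset.card_lt_card
        rw [Finset.ssubset_iff_of_subset]
        · have : sd w x y a < 0 ∨ sd w x y b < 0 := by
            by_contra hh
            push Not at hh
            have hax : (a : EuclideanSpace ℝ (Fin 2)) ≠ x := by
              intro h; rw [← h, sd_left] at hxs; exact lt_irrefl _ hxs
            have hbx : (b : EuclideanSpace ℝ (Fin 2)) ≠ x := by
              intro h; rw [← h, sd_right] at hxs; exact lt_irrefl _ hxs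
            have ea := C.sd_zero x.2 y.2 a.2 hxw hyw hxy' (le_antisymm h1 hh.1)
            have eb := C.sd_zero x.2 y.2 b.2 hxw hyw hxy' (le_antisymm h2 hh.2)
            have ea := ea.resolve_left hax
            have eb := eb.resolve_left hbx
            exact hab' (ea.trans eb.symm)
          rcases this with h | h
          · exact ⟨a, by simp [cap, h], by simp [cap, sd_left]⟩
          · exact ⟨b, by simp [cap, h], by simp [cap, sd_right]⟩
        · intro p hp
          simp only [cap, Finset.mem_filter] at hp ⊢
          exact ⟨hp.1, C.sub x.2 y.2 a.2 b.2 hp.1 hxw hyw hxy' haw hbw hab' h1 h2 hp.2⟩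
      omega
    have hpos : 0 ≤ sd w x y a ∧ 0 ≤ sd w x y b := by
      by_contra hh
      apply notbig
      by_contra hh2
      rcases lt_or_ge (sd w x y a) 0 with h1 | h1
      · rcases le_or_gt (sd w x y b) 0 with h2 | h2
        · exact hh2 ⟨h1.le, h2⟩
        · exact nc C hT hxy hab hxw hyw h1 h2
      · rcases lt_or_ge (sd w x y b) 0 with h2 | h2
        · rcases h1.lt_or_eq with h3 | h3
          · exact nc C hT hxy hab.symm hxw hyw h2 h3
          · exact hh2 ⟨h3.symm.le, h2.le⟩
        · exact hh ⟨h1, h2⟩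
    have e1 := no_common C a.2 b.2 x.2 y.2 c.2 haw hbw hab' hxw hyw hxy' hxs hys
      hpos.1 hpos.2 hc hce.1
    have e2 := no_common C a.2 b.2 x.2 y.2 d.2 haw hbw hab' hxw hyw hxy' hxs hys
      hpos.1 hpos.2 hd hce.2
    exact hcd' (e1.trans e2.symm)
  -- an edge of `Q` at `w` is impossible
  have noQ : ∀ z : ↥P, T.Adj z ⟨w, hwP⟩ → (z : EuclideanSpace ℝ (Fin 2)) ≠ u ∧
      (z : EuclideanSpace ℝ (Fin 2)) ≠ v := by
    intro z hz
    by_contra hh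
    have hin : InQ P u v w z w := by
      by_cases h : (z : EuclideanSpace ℝ (Fin 2)) = u
      · exact Or.inr (Or.inl (by rw [h]))
      · have h' : (z : EuclideanSpace ℝ (Fin 2)) = v := by
          by_contra h'; exact hh ⟨h, h'⟩
        exact Or.inr (Or.inr (by rw [h']))
    have := hQ c d z ⟨w, hwP⟩ hcd hz (Or.inl hH) hin
    rw [Sym2.eq_iff] at this
    rcases this with h | h
    · exact hdw (congrArg Subtype.val h.2)
    · exact hcw (congrArg Subtype.val h.1)
  have inside : ∀ z : ↥P, (z : EuclideanSpace ℝ (Fin 2)) ≠ w →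
      ((z : EuclideanSpace ℝ (Fin 2)) = u ∨ (z : EuclideanSpace ℝ (Fin 2)) = v) →
      sd w a b z ≤ 0 := by
    intro z hzw hz
    by_contra hh
    push Not at hh
    have := noQ z (leaf z hzw (fun y hy => claim z y hy hzw hh))
    tauto
  have hu0 := inside ⟨u, huP⟩ huw (Or.inl rfl)
  have hv0 := inside ⟨v, hvP⟩ hvw (Or.inr rfl)
  simp only at hu0 hv0
  -- `w` is adjacent to `a` or `b`
  obtain ⟨p, q, hpq, hp, hq⟩ := cut hconn {z : ↥P | 0 < sd w a b z} (x := ⟨w, hwP⟩) (y := a)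
    hww (by simp [sd_left])
  simp only [Set.mem_setOf_eq, not_lt] at hp hq
  have hpw : (p : EuclideanSpace ℝ (Fin 2)) = w := by
    by_contra hpw
    have := claim p q hpq hpw hp
    rw [this] at hq
    linarith
  have hpw' : p = ⟨w, hwP⟩ := Subtype.ext hpw
  subst hpw'
  have hq0 : sd w a b q = 0 := by
    rcases hq.lt_or_eq with h | h
    · exact (nc C hT hab hpq.symm haw hbw h hp).elim
    · exact h
  have hqn := noQ q hpq.symm
  rcases C.sd_zero a.2 b.2 q.2 haw hbw hab' hq0 with h | h
  · rw [h] at hqn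
    have := angle_lt C a.2 b.2 huP hvP haw hbw hab' huw hvw hqn.1.symm hqn.2.symm hu0 hv0
    exact absurd (hmax a a.2 b b.2 haw hbw) (not_le.2 this)
  · rw [h] at hqn
    have sw : ∀ z, sd w b a z = sd w a b z := by
      intro z; unfold sd cr; ring
    have := angle_lt C b.2 a.2 huP hvP hbw haw hab'.symm huw hvw hqn.1.symm hqn.2.symm
      (by rw [sw]; exact hu0) (by rw [sw]; exact hv0)
    exact absurd (hmax b b.2 a a.2 hbw haw) (not_le.2 this)
end

section
/- Let G be a complete geometric graph on n ≥ 3 points in general position with exactly one point interior to the convex hull. If c is a coloring of the edges of G using exactly C(n,2) - n + 1 colors, then G contains a plane spanning tree all of whose edges have pairwise distinct colors. -/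
open Set

structure GeoData {V : Type*} [Fintype V] [DecidableEq V] (w : V) (D : V → V → V → ℝ)
    (NC : V → V → V → V → Prop) : Prop where
  cyc : ∀ a b c, D a b c = D b c a
  anti : ∀ a b c, D a b c = - D b a c
  ne : ∀ a b c, a ≠ b → b ≠ c → a ≠ c → D a b c ≠ 0
  tr : ∀ v a b c, v ≠ w → 0 < D v a b → 0 < D v b c → 0 < D v a c
  winp : ∀ b, b ≠ w → ∃ p, 0 < D w b p
  winn : ∀ b, b ≠ w → ∃ p, D w b p < 0
  nc : ∀ a b x y, 0 < D a b x → 0 < D a b y → NC a b x y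
  ncl : ∀ a b x y, NC a b x y → NC b a x y
  ncs : ∀ a b x y, NC a b x y → NC x y a b

section
set_option linter.unusedSectionVars false
variable {V : Type*} [Fintype V] [DecidableEq V] {w : V} {D : V → V → V → ℝ}
    {NC : V → V → V → V → Prop}

def NCT (NC : V → V → V → V → Prop) (T : SimpleGraph V) : Prop :=
  ∀ a b x y : V, T.Adj a b → T.Adj x y → a ≠ x → a ≠ y → b ≠ x → b ≠ y → NC a b x y

def GoodT (NC : V → V → V → V → Prop) (Q : Finset V) (R : Finset (Sym2 V))
    (T : SimpleGraph V) : Prop :=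
  (∀ a b, T.Adj a b → a ∈ Q ∧ b ∈ Q ∧ s(a, b) ∉ R) ∧ NCT NC T ∧
    ∀ a ∈ Q, ∀ b ∈ Q, T.Reachable a b

def DSide (D : V → V → V → ℝ) (Q : Finset V) (a b : V) : Prop :=
  a ≠ b ∧ ∀ p ∈ Q, p ≠ a → p ≠ b → 0 < D a b p

theorem GeoData.swap (g : GeoData w D NC) (a b c : V) : D a b c = - D a c b := by
  rw [g.cyc a b c, g.anti b c a, g.cyc c b a, g.cyc b a c]

theorem GeoData.zero (g : GeoData w D NC) (a b : V) : D a b b = 0 := by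
  have := g.swap a b b; linarith

theorem GeoData.zero' (g : GeoData w D NC) (a b : V) : D a b a = 0 := by
  have := g.cyc a a b; have := g.anti a a b; linarith

theorem star_good (Q : Finset V) (R : Finset (Sym2 V)) (v : V) (hv : v ∈ Q)
    (h : ∀ u ∈ Q, u ≠ v → s(v, u) ∉ R) : ∃ T, GoodT NC Q R T := by
  refine ⟨{ Adj := fun a b => a ≠ b ∧ a ∈ Q ∧ b ∈ Q ∧ (a = v ∨ b = v)
            symm := ⟨fun a b h => ⟨h.1.symm, h.2.2.1, h.2.1, h.2.2.2.symm⟩⟩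
            loopless := ⟨fun a h => h.1 rfl⟩ }, ?_, ?_, ?_⟩
  · rintro a b ⟨h1, h2, h3, rfl | rfl⟩
    · exact ⟨h2, h3, h b h3 h1.symm⟩
    · exact ⟨h2, h3, by rw [Sym2.eq_swap]; exact h a h2 h1⟩
  · rintro a b x y ⟨_, _, _, h1⟩ ⟨_, _, _, h2⟩ n1 n2 n3 n4
    grind
  · have key : ∀ a ∈ Q, SimpleGraph.Reachable
      ({ Adj := fun a b => a ≠ b ∧ a ∈ Q ∧ b ∈ Q ∧ (a = v ∨ b = v)
         symm := ⟨fun a b h => ⟨h.1.symm, h.2.2.1, h.2.1, h.2.2.2.symm⟩⟩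
         loopless := ⟨fun a h => h.1 rfl⟩ } : SimpleGraph V) a v := by
      intro a ha
      by_cases hav : a = v
      · subst hav; exact SimpleGraph.Reachable.refl _
      · exact SimpleGraph.Adj.reachable ⟨hav, ha, hv, Or.inr rfl⟩
    intro a ha b hb
    exact (key a ha).trans (key b hb).symm

theorem leaf_good (g : GeoData w D NC) (Q : Finset V) (R R' : Finset (Sym2 V)) (v t : V)
    (hv : v ∉ Q) (ht : t ∈ Q) (hs : DSide D (insert v Q) v t ∨ DSide D (insert v Q) t v)
    (hR : s(v, t) ∉ R) (hRR : ∀ e ∈ R, v ∉ e → e ∈ R')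
    (T : SimpleGraph V) (hT : GoodT NC Q R' T) : ∃ T, GoodT NC (insert v Q) R T := by
  obtain ⟨h1, h2, h3⟩ := hT
  have hvt : v ≠ t := by rintro rfl; exact hv ht
  have hnc : ∀ x ∈ Q, ∀ y ∈ Q, x ≠ t → y ≠ t → NC v t x y := by
    intro x hx y hy hxt hyt
    have hxv : x ≠ v := by rintro rfl; exact hv hx
    have hyv : y ≠ v := by rintro rfl; exact hv hy
    rcases hs with hs | hs
    · exact g.nc _ _ _ _ (hs.2 x (by simp [hx]) hxv hxt) (hs.2 y (by simp [hy]) hyv hyt)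
    · exact g.ncl _ _ _ _
        (g.nc _ _ _ _ (hs.2 x (by simp [hx]) hxt hxv) (hs.2 y (by simp [hy]) hyt hyv))
  let T' : SimpleGraph V :=
    { Adj := fun a b => T.Adj a b ∨ (a = v ∧ b = t) ∨ (a = t ∧ b = v)
      symm := ⟨fun a b h => by
        rcases h with h | h | h
        · exact Or.inl h.symm
        · exact Or.inr (Or.inr ⟨h.2, h.1⟩)
        · exact Or.inr (Or.inl ⟨h.2, h.1⟩)⟩
      loopless := ⟨fun a h => by
        rcases h with h | h | h
        · exact T.loopless.irrefl a h
        · exact hvt (h.1.symm.trans h.2)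
        · exact hvt (h.2.symm.trans h.1)⟩ }
  have hle : T ≤ T' := fun a b h => Or.inl h
  refine ⟨T', ?_, ?_, ?_⟩
  · rintro a b (h | ⟨rfl, rfl⟩ | ⟨rfl, rfl⟩)
    · obtain ⟨ha, hb, hab⟩ := h1 a b h
      refine ⟨by simp [ha], by simp [hb], fun hh => hab (hRR _ hh ?_)⟩
      simp only [Sym2.mem_iff, not_or]
      exact ⟨by rintro rfl; exact hv ha, by rintro rfl; exact hv hb⟩
    · exact ⟨by simp, by simp [ht], hR⟩
    · exact ⟨by simp [ht], by simp, by rwa [Sym2.eq_swap]⟩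
  · rintro a b x y (h | ⟨rfl, rfl⟩ | ⟨rfl, rfl⟩) (k | ⟨rfl, rfl⟩ | ⟨rfl, rfl⟩) n1 n2 n3 n4
    · exact h2 a b x y h k n1 n2 n3 n4
    · exact g.ncs _ _ _ _ (hnc _ (h1 _ _ h).1 _ (h1 _ _ h).2.1 n2 n4)
    · exact g.ncs _ _ _ _ (g.ncl _ _ _ _ (hnc _ (h1 _ _ h).1 _ (h1 _ _ h).2.1 n1 n3))
    · exact hnc _ (h1 _ _ k).1 _ (h1 _ _ k).2.1 n3.symm n4.symm
    · exact absurd rfl n1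
    · exact absurd rfl n2
    · exact g.ncl _ _ _ _ (hnc _ (h1 _ _ k).1 _ (h1 _ _ k).2.1 n1.symm n2.symm)
    · exact absurd rfl n2
    · exact absurd rfl n1
  · have key : ∀ a ∈ insert v Q, T'.Reachable a t := by
      intro a ha
      rcases Finset.mem_insert.1 ha with rfl | ha
      · exact SimpleGraph.Adj.reachable (Or.inr (Or.inl ⟨rfl, rfl⟩))
      · exact (h3 a ha t ht).mono hle
    intro a ha b hb
    exact (key a ha).trans (key b hb).symm

theorem GeoData.exists_first (g : GeoData w D NC) (v : V) (hv : v ≠ w) (Q : Finset V)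
    (hne : Q.Nonempty) (hQ : v ∉ Q) : ∃ a ∈ Q, ∀ p ∈ Q, p ≠ a → 0 < D v a p := by
  induction hne using Finset.Nonempty.cons_induction with
  | singleton a => exact ⟨a, by simp, by simp⟩
  | cons x s hx hs ih =>
    simp only [Finset.mem_cons, not_or] at hQ
    obtain ⟨a, ha, h⟩ := ih hQ.2
    have hxa : x ≠ a := by rintro rfl; exact hx ha
    have hva : v ≠ a := by rintro rfl; exact hQ.2 ha
    rcases lt_or_gt_of_ne (g.ne v x a hQ.1 hxa hva) with h1 | h1
    · refine ⟨a, by simp [ha], fun p hp hpa => ?_⟩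
      rcases Finset.mem_cons.1 hp with rfl | hp
      · rw [g.swap]; linarith
      · exact h p hp hpa
    · refine ⟨x, by simp, fun p hp hpx => ?_⟩
      rcases Finset.mem_cons.1 hp with rfl | hp
      · exact absurd rfl hpx
      · by_cases hpa : p = a
        · rw [hpa]; exact h1
        · exact g.tr v x a p hv h1 (h p hp hpa)

theorem GeoData.exists_last (g : GeoData w D NC) (v : V) (hv : v ≠ w) (Q : Finset V)
    (hne : Q.Nonempty) (hQ : v ∉ Q) : ∃ a ∈ Q, ∀ p ∈ Q, p ≠ a → 0 < D v p a := by
  induction hne using Finset.Nonempty.cons_induction with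
  | singleton a => exact ⟨a, by simp, by simp⟩
  | cons x s hx hs ih =>
    simp only [Finset.mem_cons, not_or] at hQ
    obtain ⟨a, ha, h⟩ := ih hQ.2
    have hxa : x ≠ a := by rintro rfl; exact hx ha
    have hva : v ≠ a := by rintro rfl; exact hQ.2 ha
    rcases lt_or_gt_of_ne (g.ne v x a hQ.1 hxa hva) with h1 | h1
    · have h1' : 0 < D v a x := by rw [g.swap]; linarith
      refine ⟨x, by simp, fun p hp hpx => ?_⟩
      rcases Finset.mem_cons.1 hp with rfl | hp
      · exact absurd rfl hpx
      · by_cases hpa : p = a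
        · rw [hpa]; exact h1'
        · exact g.tr v p a x hv (h p hp hpa) h1'
    · refine ⟨a, by simp [ha], fun p hp hpa => ?_⟩
      rcases Finset.mem_cons.1 hp with rfl | hp
      · exact h1
      · exact h p hp hpa

theorem GeoData.exists_next (g : GeoData w D NC) (v : V) (hv : v ≠ w) (Q : Finset V)
    (hne : (Q.erase v).Nonempty) : ∃ a ∈ Q, DSide D Q v a := by
  obtain ⟨a, ha, h⟩ := g.exists_first v hv (Q.erase v) hne (by simp)
  simp only [Finset.mem_erase] at ha h
  exact ⟨a, ha.2, ha.1.symm, fun p hp h1 h2 => h p ⟨h1, hp⟩ h2⟩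

theorem GeoData.exists_prev (g : GeoData w D NC) (v : V) (hv : v ≠ w) (Q : Finset V)
    (hne : (Q.erase v).Nonempty) : ∃ a ∈ Q, DSide D Q a v := by
  obtain ⟨a, ha, h⟩ := g.exists_last v hv (Q.erase v) hne (by simp)
  simp only [Finset.mem_erase] at ha h
  exact ⟨a, ha.2, ha.1, fun p hp h1 h2 => by
    rw [g.cyc]; exact h p ⟨h2, hp⟩ h1⟩

theorem DSide.ne_pn (g : GeoData w D NC) {Q : Finset V} (hQ : 3 ≤ Q.card) {a v b : V}
    (h1 : DSide D Q a v) (h2 : DSide D Q v b) : a ≠ b := by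
  rintro rfl
  have : (({a, v} : Finset V)).card < Q.card := lt_of_le_of_lt Finset.card_le_two (by omega)
  obtain ⟨p, hp, hp'⟩ := Finset.exists_mem_notMem_of_card_lt_card this
  simp only [Finset.mem_insert, Finset.mem_singleton, not_or] at hp'
  have := h1.2 p hp hp'.1 hp'.2
  have := h2.2 p hp hp'.2 hp'.1
  have := g.anti a v p
  linarith

theorem DSide.unique_next (g : GeoData w D NC) {v a b : V}
    (h1 : DSide D Finset.univ v a) (h2 : DSide D Finset.univ v b) : a = b := by
  by_contra h
  have := h1.2 b (by simp) h2.1.symm (Ne.symm h)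
  have := h2.2 a (by simp) h1.1.symm h
  have := g.swap v a b
  linarith

theorem DSide.unique_prev (g : GeoData w D NC) {v a b : V}
    (h1 : DSide D Finset.univ a v) (h2 : DSide D Finset.univ b v) : a = b := by
  by_contra h
  have := h1.2 b (by simp) (Ne.symm h) h2.1
  have := h2.2 a (by simp) h h1.1
  have := g.swap v a b
  have := g.cyc v a b
  have := g.cyc v b a
  have := g.cyc a v b
  have := g.cyc b v a
  linarith

theorem DSide.right_ne (g : GeoData w D NC) {a b : V} (h : DSide D Finset.univ a b) : b ≠ w := by
  rintro rfl
  obtain ⟨p, hp⟩ := g.winp a h.1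
  have h1 : p ≠ a := by rintro rfl; rw [g.zero] at hp; exact lt_irrefl _ hp
  have h2 : p ≠ b := by rintro rfl; rw [g.zero'] at hp; exact lt_irrefl _ hp
  have := h.2 p (by simp) h1 h2
  have := g.anti a b p
  linarith

theorem DSide.left_ne (g : GeoData w D NC) {a b : V} (h : DSide D Finset.univ a b) : a ≠ w := by
  rintro rfl
  obtain ⟨p, hp⟩ := g.winn b h.1.symm
  have h1 : p ≠ b := by rintro rfl; rw [g.zero] at hp; exact lt_irrefl _ hp
  have h2 : p ≠ a := by rintro rfl; rw [g.zero'] at hp; exact lt_irrefl _ hp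
  have := h.2 p (by simp) h2 h1
  linarith

/-- The hull is a single cycle. -/
theorem GeoData.cycle (g : GeoData w D NC) (S : V → Prop) (v : V) (hv : v ≠ w) (hS : S v)
    (hcl : ∀ a b, S a → DSide D Finset.univ a b → S b) : ∀ b, b ≠ w → S b := by
  have key : ∀ n : ℕ, ∀ b, b ≠ w →
      (Finset.univ.filter (fun p => 0 < D v p b)).card = n → S b := by
    intro n
    induction n using Nat.strong_induction_on with
    | _ n ih =>
      intro b hb hn
      by_cases hbv : b = v
      · rw [hbv]; exact hS
      obtain ⟨a, -, ha⟩ := g.exists_prev b hb Finset.univ ⟨v, by simp [Ne.symm hbv]⟩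
      by_cases hav : a = v
      · exact hcl a b (hav ▸ hS) ha
      have h0 : 0 < D v a b := by
        rw [g.cyc]; exact ha.2 v (by simp) (Ne.symm hav) (Ne.symm hbv)
      refine hcl a b (ih _ ?_ a (ha.left_ne g) rfl) ha
      rw [← hn]
      apply Finset.card_lt_card
      rw [Finset.ssubset_iff_of_subset]
      · exact ⟨a, by simp [h0], by simp [g.zero]⟩
      · intro p hp
        simp only [Finset.mem_filter, Finset.mem_univ, true_and] at hp ⊢
        exact g.tr v p a b hv hp h0
  intro b hb
  exact key _ b hb rfl

theorem deg_sum (Q : Finset V) (R : Finset (Sym2 V)) :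
    ∑ v ∈ Q, (R.filter (fun e => v ∈ e)).card ≤ 2 * R.card := by
  have := Finset.sum_card_bipartiteAbove_eq_sum_card_bipartiteBelow
    (s := Q) (t := R) (fun v e => v ∈ e)
  simp only [Finset.bipartiteAbove, Finset.bipartiteBelow] at this
  rw [this, mul_comm]
  apply Finset.sum_le_card_nsmul
  intro e _
  induction e using Sym2.ind with
  | _ a b =>
    refine (Finset.card_le_card (t := {a, b}) ?_).trans Finset.card_le_two
    intro x hx
    simpa using (Finset.mem_filter.1 hx).2

theorem two_le_deg {R : Finset (Sym2 V)} {v a b : V} (hab : a ≠ b) (ha : s(v, a) ∈ R)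
    (hb : s(v, b) ∈ R) : 2 ≤ (R.filter (fun e => v ∈ e)).card := by
  have h : s(v, a) ≠ s(v, b) := by
    intro h; exact hab (Sym2.congr_right.1 h)
  rw [← Finset.card_pair h]
  apply Finset.card_le_card
  intro e he
  simp only [Finset.mem_insert, Finset.mem_singleton] at he
  rcases he with rfl | rfl <;> simp [ha, hb]

theorem erase_deg (R : Finset (Sym2 V)) (v : V) :
    (R.filter (fun e => v ∉ e)).card + (R.filter (fun e => v ∈ e)).card = R.card := by
  rw [add_comm]; exact Finset.card_filter_add_card_filter_not _

theorem lemmaA (g : GeoData w D NC) (n : ℕ) : ∀ (Q : Finset V) (R : Finset (Sym2 V)),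
    Q.card = n → R.card + 2 ≤ n → ∃ T, GoodT NC Q R T := by
  induction n with
  | zero => intro Q R _ h; omega
  | succ n ih =>
    intro Q R hQ hR
    by_cases h0 : ∃ v ∈ Q, ∀ u ∈ Q, u ≠ v → s(v, u) ∉ R
    · obtain ⟨v, hv, h⟩ := h0
      exact star_good Q R v hv h
    push Not at h0
    have hpos : ∀ v ∈ Q, 1 ≤ (R.filter (fun e => v ∈ e)).card := by
      intro v hv
      obtain ⟨u, _, _, h⟩ := h0 v hv
      exact Finset.card_pos.2 ⟨s(v, u), by simp [h]⟩
    have hQ3 : 3 ≤ Q.card := by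
      by_contra hlt
      have : R.card = 0 := by omega
      obtain ⟨v, hv⟩ : Q.Nonempty := Finset.card_pos.1 (by omega)
      have := hpos v hv
      have := erase_deg R v
      omega
    by_cases h1 : ∃ v ∈ Q, v ≠ w ∧ ∃ t ∈ Q, (DSide D Q v t ∨ DSide D Q t v) ∧ s(v, t) ∉ R
    · obtain ⟨v, hv, hvw, t, ht, hs, hvt⟩ := h1
      have hne : v ≠ t := by
        rcases hs with hs | hs
        · exact hs.1
        · exact hs.1.symm
      have := hpos v hv
      have := erase_deg R v
      obtain ⟨T, hT⟩ := ih (Q.erase v) (R.filter (fun e => v ∉ e))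
        (by rw [Finset.card_erase_of_mem hv]; omega) (by omega)
      have := leaf_good g (Q.erase v) R _ v t (by simp) (by simp [ht, hne.symm])
        (by rwa [Finset.insert_erase hv]) hvt (by intro e he h; simp [he, h]) T hT
      rwa [Finset.insert_erase hv] at this
    · exfalso
      push Not at h1
      have h2 : ∀ v ∈ Q.erase w, 2 ≤ (R.filter (fun e => v ∈ e)).card := by
        intro v hv
        simp only [Finset.mem_erase] at hv
        have hne : (Q.erase v).Nonempty := by
          apply Finset.card_pos.1; rw [Finset.card_erase_of_mem hv.2]; omega
        obtain ⟨a, ha, ha'⟩ := g.exists_prev v hv.1 Q hne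
        obtain ⟨b, hb, hb'⟩ := g.exists_next v hv.1 Q hne
        exact two_le_deg (ha'.ne_pn g hQ3 hb') (h1 v hv.2 hv.1 a ha (Or.inr ha'))
          (h1 v hv.2 hv.1 b hb (Or.inl hb'))
      have h3 := deg_sum (Q.erase w) R
      have h4 := Finset.card_nsmul_le_sum _ _ _ h2
      have h5 := Finset.pred_card_le_card_erase (s := Q) (a := w)
      simp only [smul_eq_mul] at h4
      omega

theorem combi (g : GeoData w D NC) (h3 : 3 ≤ Fintype.card V) (Rep : Finset (Sym2 V) → Prop)
    (hRc : ∀ R, Rep R → R.card + 1 = Fintype.card V)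
    (hnd : ∀ R, Rep R → ∀ e ∈ R, ¬ e.IsDiag)
    (hsw : ∀ R, Rep R → ∀ e ∈ R, ∃ f, f ∉ R ∧ ¬ f.IsDiag ∧ Rep (insert f (R.erase e)))
    (R0 : Finset (Sym2 V)) (h0 : Rep R0) : ∃ R, Rep R ∧ ∃ T, GoodT NC Finset.univ R T := by
  by_contra hno
  have hno' : ∀ R, Rep R → ¬ ∃ T, GoodT NC Finset.univ R T := fun R h1 h2 => hno ⟨R, h1, h2⟩
  have hU : 3 ≤ (Finset.univ : Finset V).card := by simpa using h3
  have hner : ∀ v : V, ((Finset.univ : Finset V).erase v).Nonempty := by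
    intro v; apply Finset.card_pos.1; rw [Finset.card_erase_of_mem (by simp)]; omega
  have F1 : ∀ R, Rep R → ∀ v, ∃ u, u ≠ v ∧ s(v, u) ∈ R := by
    intro R hR v
    by_contra h
    push Not at h
    exact hno' R hR (star_good _ R v (by simp) (fun u _ hu => h u hu))
  have F2 : ∀ R, Rep R → ∀ v t, (DSide D Finset.univ v t ∨ DSide D Finset.univ t v) →
      s(v, t) ∉ R → ∀ a b, s(v, a) ∈ R → s(v, b) ∈ R → a = b := by
    intro R hR v t hs hvt a b ha hb
    by_contra hab
    have h1 := two_le_deg hab ha hb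
    have h2 := erase_deg R v
    have h4 := hRc R hR
    have hne : v ≠ t := by
      rcases hs with hs | hs
      · exact hs.1
      · exact hs.1.symm
    have hc : (Finset.univ.erase v).card = Fintype.card V - 1 := by
      rw [Finset.card_erase_of_mem (by simp), Finset.card_univ]
    obtain ⟨T, hT⟩ := lemmaA g _ (Finset.univ.erase v) (R.filter (fun e => v ∉ e)) hc (by omega)
    have := leaf_good g (Finset.univ.erase v) R _ v t (by simp) (by simp [hne.symm])
        (by rwa [Finset.insert_erase (by simp)]) hvt (by intro e he h; simp [he, h]) T hT
    rw [Finset.insert_erase (by simp)] at this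
    exact hno' R hR this
  -- vertices missing a side
  let Dv : Finset (Sym2 V) → V → Prop := fun R v =>
    ∃ t, (DSide D Finset.univ v t ∨ DSide D Finset.univ t v) ∧ s(v, t) ∉ R
  have F2' : ∀ R, Rep R → ∀ v, Dv R v → ∀ a b, s(v, a) ∈ R → s(v, b) ∈ R → a = b := by
    rintro R hR v ⟨t, hs, ht⟩
    exact F2 R hR v t hs ht
  have F4 : ∀ R, Rep R → ∀ v a, Dv R v → s(v, a) ∈ R →
      ∃ x, x ≠ a ∧ x ≠ v ∧ s(v, x) ∉ R ∧ Rep (insert s(v, x) (R.erase s(v, a))) := by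
    intro R hR v a hv ha
    obtain ⟨f, hf, hfd, hR'⟩ := hsw R hR _ ha
    have hvf : v ∈ f := by
      by_contra hvf
      obtain ⟨u, hu, hu'⟩ := F1 _ hR' v
      rcases Finset.mem_insert.1 hu' with h | h
      · exact hvf (h ▸ Sym2.mem_mk_left v u)
      · rw [Finset.mem_erase] at h
        exact h.1 (by rw [F2' R hR v hv u a h.2 ha])
    obtain ⟨x, rfl⟩ := hvf
    refine ⟨x, ?_, ?_, hf, hR'⟩
    · rintro rfl; exact hf ha
    · rintro rfl; exact hfd (by simp)
  have F5 : ∀ R, Rep R → ∀ v u, Dv R v → Dv R u → s(v, u) ∉ R := by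
    intro R hR v u hv hu hvu
    obtain ⟨x, hxu, hxv, hx, hR'⟩ := F4 R hR v u hv hvu
    obtain ⟨z, hz, hz'⟩ := F1 _ hR' u
    rcases Finset.mem_insert.1 hz' with h | h
    · rcases Sym2.mem_iff.1 (h ▸ Sym2.mem_mk_left u z : u ∈ s(v, x)) with h | h
      · subst h; exact hnd R hR _ hvu (by simp)
      · exact hxu h.symm
    · rw [Finset.mem_erase] at h
      have hvu' : s(u, v) ∈ R := by rwa [Sym2.eq_swap]
      have := F2' R hR u hu z v h.2 hvu'
      subst this
      exact h.1 Sym2.eq_swap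
  obtain ⟨y, hyw, hy⟩ := F1 R0 h0 w
  let S : V → Prop := fun u => ∃ z t R, Rep R ∧ DSide D Finset.univ z u ∧
    DSide D Finset.univ u t ∧ s(w, y) ∈ R ∧ s(z, u) ∉ R ∧ s(u, t) ∈ R
  have hstep : ∀ a b, S a → DSide D Finset.univ a b → S b := by
    rintro a b ⟨z, t, R, hR, hza, hat, hwy, hzaR, hatR⟩ hab
    obtain rfl : t = b := hat.unique_next g hab
    obtain ⟨q, -, htq⟩ := g.exists_next t (hab.right_ne g) Finset.univ (hner t)
    have haD : Dv R a := ⟨z, Or.inr hza, by rwa [Sym2.eq_swap]⟩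
    have htqR : s(t, q) ∈ R := by
      by_contra h
      exact F5 R hR a t haD ⟨q, Or.inl htq, h⟩ hatR
    obtain ⟨x, hxt, hxa, hx, hR'⟩ := F4 R hR a t haD hatR
    have haq : a ≠ q := hat.ne_pn g hU htq
    have haw := hat.left_ne g
    have htw := hat.right_ne g
    refine ⟨a, q, _, hR', hat, htq, ?_, ?_, ?_⟩
    · refine Finset.mem_insert_of_mem (Finset.mem_erase.2 ⟨?_, hwy⟩)
      intro h
      rcases Sym2.mem_iff.1 (h ▸ Sym2.mem_mk_left w y : w ∈ s(a, t)) with h | h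
      · exact haw h.symm
      · exact htw h.symm
    · intro h
      rcases Finset.mem_insert.1 h with h | h
      · exact hxt (Sym2.congr_right.1 h).symm
      · simp at h
    · refine Finset.mem_insert_of_mem (Finset.mem_erase.2 ⟨?_, htqR⟩)
      intro h
      rcases Sym2.mem_iff.1 (h ▸ Sym2.mem_mk_right t q : q ∈ s(a, t)) with h | h
      · exact haq h.symm
      · exact htq.1 h.symm
  have hSempty : ∀ u, ¬ S u := by
    intro u hu
    have huw : u ≠ w := by
      obtain ⟨z, t, R, hR, h1, h2, _⟩ := hu
      exact h1.right_ne g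
    obtain ⟨z, t, R, hR, hzy, hyt, hwy, hzyR, hytR⟩ := g.cycle S u huw hu hstep y hyw
    have := F2 R hR y z (Or.inr hzy) (by rwa [Sym2.eq_swap]) w t (by rwa [Sym2.eq_swap]) hytR
    exact hyt.right_ne g this.symm
  by_cases hall : ∃ v, v ≠ w ∧ ∀ z, DSide D Finset.univ z v → s(z, v) ∉ R0
  · -- no side lies in `R0`
    obtain ⟨v, hvw, hv⟩ := hall
    have hnos : ∀ u, u ≠ w → ∀ z, DSide D Finset.univ z u → s(z, u) ∉ R0 := by
      refine g.cycle (fun u => ∀ z, DSide D Finset.univ z u → s(z, u) ∉ R0) v hvw hv ?_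
      intro a b ha hab z hzb hzR
      obtain rfl : z = a := hzb.unique_prev g hab
      obtain ⟨q, -, hq⟩ := g.exists_prev z (hab.left_ne g) Finset.univ (hner z)
      exact hSempty z ⟨q, b, R0, h0, hq, hab, hy, ha q hq, hzR⟩
    have hallD : ∀ u, u ≠ w → Dv R0 u := by
      intro u hu
      obtain ⟨q, -, hq⟩ := g.exists_prev u hu Finset.univ (hner u)
      exact ⟨q, Or.inr hq, by rw [Sym2.eq_swap]; exact hnos u hu q hq⟩
    have hspoke : ∀ u, u ≠ w → s(u, w) ∈ R0 := by
      intro u hu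
      obtain ⟨x, hx, hx'⟩ := F1 R0 h0 u
      by_cases hxw : x = w
      · rwa [← hxw]
      · exact absurd hx' (F5 R0 h0 u x (hallD u hu) (hallD x hxw))
    obtain ⟨x, hxw, hxy, hx, hR'⟩ := F4 R0 h0 y w (hallD y hyw) (hspoke y hyw)
    obtain ⟨p, -, hp⟩ := g.exists_prev x hxw Finset.univ (hner x)
    obtain ⟨q, -, hq⟩ := g.exists_next x hxw Finset.univ (hner x)
    have hpq := hp.ne_pn g hU hq
    have hxwR : s(x, w) ∈ insert s(y, x) (R0.erase s(y, w)) := by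
      refine Finset.mem_insert_of_mem (Finset.mem_erase.2 ⟨?_, hspoke x hxw⟩)
      intro h
      rcases Sym2.mem_iff.1 (h ▸ Sym2.mem_mk_left x w : x ∈ s(y, w)) with h | h
      · exact hxy h
      · exact hxw h
    have hxyR : s(x, y) ∈ insert s(y, x) (R0.erase s(y, w)) := by
      rw [Sym2.eq_swap]; exact Finset.mem_insert_self _ _
    have hin : ∀ t, (DSide D Finset.univ x t ∨ DSide D Finset.univ t x) → t = y := by
      intro t ht
      have h1 : s(x, t) ∈ insert s(y, x) (R0.erase s(y, w)) := by
        by_contra h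
        exact hyw (F2 _ hR' x t ht h w y hxwR hxyR).symm
      rcases Finset.mem_insert.1 h1 with h | h
      · rw [Sym2.eq_swap (a := y)] at h
        exact Sym2.congr_right.1 h
      · exfalso
        have h := Finset.mem_of_mem_erase h
        rcases ht with ht | ht
        · exact hnos t (ht.right_ne g) x ht h
        · rw [Sym2.eq_swap] at h
          exact hnos x hxw t ht h
    exact hpq ((hin p (Or.inr hp)).trans (hin q (Or.inl hq)).symm)
  · -- all sides lie in `R0`
    push Not at hall
    have hprev : ∀ u, u ≠ w → ∀ z, DSide D Finset.univ z u → s(z, u) ∈ R0 := by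
      intro u hu z hz
      obtain ⟨z', hz', h⟩ := hall u hu
      rwa [hz.unique_prev g hz']
    have h2 : ∀ v ∈ Finset.univ.erase w, 2 ≤ ((R0.erase s(w, y)).filter (fun e => v ∈ e)).card := by
      intro v hv
      have hvw : v ≠ w := by simpa using hv
      obtain ⟨p, -, hp⟩ := g.exists_prev v hvw Finset.univ (hner v)
      obtain ⟨q, -, hq⟩ := g.exists_next v hvw Finset.univ (hner v)
      have hne : ∀ t, t ≠ w → s(v, t) ≠ s(w, y) := by
        intro t ht h
        rcases Sym2.mem_iff.1 (h ▸ Sym2.mem_mk_left w y : w ∈ s(v, t)) with h | h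
        · exact hvw h.symm
        · exact ht h.symm
      refine two_le_deg (hp.ne_pn g hU hq) (Finset.mem_erase.2 ⟨hne p (hp.left_ne g), ?_⟩)
        (Finset.mem_erase.2 ⟨hne q (hq.right_ne g), ?_⟩)
      · rw [Sym2.eq_swap]; exact hprev v hvw p hp
      · exact hprev q (hq.right_ne g) v hq
    have h4 := deg_sum (Finset.univ.erase w) (R0.erase s(w, y))
    have h5 := Finset.card_nsmul_le_sum _ _ _ h2
    rw [Finset.card_erase_of_mem hy] at h4
    rw [Finset.card_erase_of_mem (by simp), Finset.card_univ] at h5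
    simp only [smul_eq_mul] at h5
    have := hRc R0 h0
    omega

end

theorem geo_concrete (P : Finset (EuclideanSpace ℝ (Fin 2)))
    (hgen : ∀ p ∈ P, ∀ q ∈ P, ∀ r ∈ P, p ≠ q → q ≠ r → p ≠ r →
      ¬ Collinear ℝ ({p, q, r} : Set (EuclideanSpace ℝ (Fin 2))))
    (w : EuclideanSpace ℝ (Fin 2)) (hwP : w ∈ P)
    (hwInt : w ∈ interior (convexHull ℝ (↑P : Set (EuclideanSpace ℝ (Fin 2)))))
    (hwUnique : ∀ p ∈ P, p ≠ w →
      p ∉ interior (convexHull ℝ (↑P : Set (EuclideanSpace ℝ (Fin 2))))) :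
    GeoData (⟨w, hwP⟩ : ↥P)
      (fun a b c => (b.1 0 - a.1 0) * (c.1 1 - a.1 1) - (b.1 1 - a.1 1) * (c.1 0 - a.1 0))
      (fun a b x y => openSegment ℝ (a : EuclideanSpace ℝ (Fin 2)) (b : EuclideanSpace ℝ (Fin 2)) ∩
      openSegment ℝ (x : EuclideanSpace ℝ (Fin 2)) (y : EuclideanSpace ℝ (Fin 2)) = ∅) := by
  -- non-degeneracy
  have hdet : ∀ a b c : ↥P, a ≠ b → b ≠ c → a ≠ c →
      (b.1 0 - a.1 0) * (c.1 1 - a.1 1) - (b.1 1 - a.1 1) * (c.1 0 - a.1 0) ≠ 0 := by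
    intro a b c hab hbc hac h
    refine hgen a a.2 b b.2 c c.2 (fun h => hab (Subtype.ext h))
      (fun h => hbc (Subtype.ext h)) (fun h => hac (Subtype.ext h)) ?_
    rw [collinear_iff_of_mem (p₀ := a.1) (by simp)]
    refine ⟨b.1 - a.1, ?_⟩
    have hba : b.1 0 - a.1 0 ≠ 0 ∨ b.1 1 - a.1 1 ≠ 0 := by
      by_contra hh
      push Not at hh
      apply hab
      apply Subtype.ext
      ext i
      fin_cases i
      · simp; linarith [hh.1]
      · simp; linarith [hh.2]
    have hc : ∃ r : ℝ, c.1 = r • (b.1 - a.1) + a.1 := by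
      rcases hba with hb | hb
      · refine ⟨(c.1 0 - a.1 0) / (b.1 0 - a.1 0), ?_⟩
        ext i
        fin_cases i
        · simp; field_simp; ring
        · simp; field_simp; linarith
      · refine ⟨(c.1 1 - a.1 1) / (b.1 1 - a.1 1), ?_⟩
        ext i
        fin_cases i
        · simp; field_simp; linarith
        · simp; field_simp; ring
    intro p hp
    simp only [Set.mem_insert_iff, Set.mem_singleton_iff] at hp
    rcases hp with rfl | rfl | rfl
    · exact ⟨0, by simp⟩
    · exact ⟨1, by simp⟩
    · simpa using hc
  -- values of an affine functional near the interior point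
  have hwin : ∀ α β : ℝ, (α ≠ 0 ∨ β ≠ 0) →
      ∃ p : ↥P, 0 < α * (p.1 0 - w 0) + β * (p.1 1 - w 1) := by
    intro α β hαβ
    by_contra hcon
    push Not at hcon
    let L : EuclideanSpace ℝ (Fin 2) →ₗ[ℝ] ℝ :=
      { toFun := fun x => α * x 0 + β * x 1
        map_add' := by intro x y; simp; ring
        map_smul' := by intro r x; simp; ring }
    have hconv : Convex ℝ {x | L x ≤ L w} := convex_halfSpace_le L.isLinear _
    have hsub : convexHull ℝ (↑P : Set (EuclideanSpace ℝ (Fin 2))) ⊆ {x | L x ≤ L w} := by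
      apply convexHull_min _ hconv
      intro p hp
      have := hcon ⟨p, hp⟩
      simp only [Set.mem_ofPred_eq, L, LinearMap.coe_mk, AddHom.coe_mk]
      simp only at this
      linarith
    have hnear := mem_interior_iff_mem_nhds.1 hwInt
    have hcont : Filter.Tendsto (fun t : ℝ => w + t • (!₂[α, β] : EuclideanSpace ℝ (Fin 2)))
        (nhdsWithin 0 (Set.Ioi 0)) (nhds w) := by
      have : Continuous (fun t : ℝ => w + t • (!₂[α, β] : EuclideanSpace ℝ (Fin 2))) := by
        fun_prop
      have h := this.tendsto 0
      simp only [zero_smul, add_zero] at h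
      exact h.mono_left nhdsWithin_le_nhds
    have hev := hcont.eventually hnear
    obtain ⟨t, ht, ht0⟩ := (hev.and self_mem_nhdsWithin).exists
    have h1 := hsub ht
    simp only [Set.mem_ofPred_eq, L, LinearMap.coe_mk, AddHom.coe_mk] at h1
    simp at h1
    have ht0 : 0 < t := ht0
    have h2 : 0 < α * α + β * β := by
      rcases hαβ with h | h
      · nlinarith [mul_self_pos.2 h, mul_self_nonneg β]
      · nlinarith [mul_self_pos.2 h, mul_self_nonneg α]
    nlinarith [mul_pos ht0 h2]
  -- supporting functional at a hull vertex
  have hsupp : ∀ v : ↥P, v ≠ ⟨w, hwP⟩ → ∃ α β : ℝ, (α ≠ 0 ∨ β ≠ 0) ∧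
      ∀ p : ↥P, α * (p.1 0 - v.1 0) + β * (p.1 1 - v.1 1) ≤ 0 := by
    intro v hv
    have hvi := hwUnique v v.2 (by simpa [Subtype.ext_iff] using hv)
    have hcx := (convex_convexHull ℝ (↑P : Set (EuclideanSpace ℝ (Fin 2))))
    obtain ⟨f, hf⟩ := geometric_hahn_banach_open_point hcx.interior isOpen_interior hvi
    have hcl : convexHull ℝ (↑P : Set (EuclideanSpace ℝ (Fin 2))) ⊆ {x | f x ≤ f v} := by
      have h1 : closure (interior (convexHull ℝ (↑P : Set (EuclideanSpace ℝ (Fin 2))))) ⊆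
          {x | f x ≤ f v} :=
        closure_minimal (fun x hx => (hf x hx).le) (isClosed_le f.continuous continuous_const)
      rw [hcx.closure_interior_eq_closure_of_nonempty_interior ⟨w, hwInt⟩] at h1
      exact subset_closure.trans h1
    have hrep : ∀ x, f x = f (!₂[1, 0] : EuclideanSpace ℝ (Fin 2)) * x 0 +
        f (!₂[0, 1] : EuclideanSpace ℝ (Fin 2)) * x 1 := by
      intro x
      have : x = x 0 • (!₂[1, 0] : EuclideanSpace ℝ (Fin 2)) +
          x 1 • (!₂[0, 1] : EuclideanSpace ℝ (Fin 2)) := by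
        ext i; fin_cases i <;> simp
      conv_lhs => rw [this]
      simp only [map_add, map_smul, smul_eq_mul]
      ring
    refine ⟨f !₂[1, 0], f !₂[0, 1], ?_, ?_⟩
    · by_contra hh
      push Not at hh
      have := hf w hwInt
      rw [hrep w, hrep v, hh.1, hh.2] at this
      simp at this
    · intro p
      have h : f p.1 ≤ f v.1 := hcl (subset_convexHull ℝ _ p.2)
      rw [hrep p, hrep v] at h
      linarith
  refine ⟨?_, ?_, hdet, ?_, ?_, ?_, ?_, ?_, ?_⟩
  · intro a b c; ring
  · intro a b c; ring
  · intro v a b c hv h1 h2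
    obtain ⟨α, β, hαβ, hs⟩ := hsupp v hv
    have ha := hs a
    have hb := hs b
    have hc := hs c
    by_contra h3
    push Not at h3
    have hav : v ≠ a := by rintro rfl; simp at h1
    have hcv : v ≠ c := by rintro rfl; simp at h2
    have hac : a ≠ c := by rintro rfl; linarith
    have h3' := lt_of_le_of_ne h3 (hdet v a c hav hac hcv)
    generalize a.1 0 - v.1 0 = a0 at *
    generalize a.1 1 - v.1 1 = a1 at *
    generalize b.1 0 - v.1 0 = b0 at *
    generalize b.1 1 - v.1 1 = b1 at *
    generalize c.1 0 - v.1 0 = c0 at *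
    generalize c.1 1 - v.1 1 = c1 at *
    have hid : (a0 * b1 - a1 * b0) * (α * c0 + β * c1) + (b0 * c1 - b1 * c0) * (α * a0 + β * a1)
      + (-(a0 * c1 - a1 * c0)) * (α * b0 + β * b1) = 0 := by ring
    have i1 := mul_nonpos_of_nonneg_of_nonpos h1.le hc
    have i2 := mul_nonpos_of_nonneg_of_nonpos h2.le ha
    have i3 := mul_nonpos_of_nonneg_of_nonpos (neg_nonneg.2 h3) hb
    have e2 : α * a0 + β * a1 = 0 := by
      have : (b0 * c1 - b1 * c0) * (α * a0 + β * a1) = 0 := by linarith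
      exact (mul_eq_zero.1 this).resolve_left h2.ne'
    have e3 : α * b0 + β * b1 = 0 := by
      have : (-(a0 * c1 - a1 * c0)) * (α * b0 + β * b1) = 0 := by linarith
      exact (mul_eq_zero.1 this).resolve_left (by linarith)
    have z1 : α * (a0 * b1 - a1 * b0) = 0 := by linear_combination b1 * e2 - a1 * e3
    have z2 : β * (a0 * b1 - a1 * b0) = 0 := by linear_combination a0 * e3 - b0 * e2
    rcases hαβ with h | h
    · exact h ((mul_eq_zero.1 z1).resolve_right h1.ne')
    · exact h ((mul_eq_zero.1 z2).resolve_right h1.ne')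
  · intro b hb
    have hne : -(b.1 1 - w 1) ≠ 0 ∨ (b.1 0 - w 0) ≠ 0 := by
      by_contra hh
      push Not at hh
      apply hb
      apply Subtype.ext
      ext i
      fin_cases i
      · simp; linarith [hh.2]
      · simp; linarith [hh.1]
    obtain ⟨p, hp⟩ := hwin _ _ hne
    exact ⟨p, by simp only; linarith⟩
  · intro b hb
    have hne : (b.1 1 - w 1) ≠ 0 ∨ -(b.1 0 - w 0) ≠ 0 := by
      by_contra hh
      push Not at hh
      apply hb
      apply Subtype.ext
      ext i
      fin_cases i
      · simp; linarith [hh.2]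
      · simp; linarith [hh.1]
    obtain ⟨p, hp⟩ := hwin _ _ hne
    exact ⟨p, by simp only; linarith⟩
  · intro a b x y hx hy
    rw [Set.eq_empty_iff_forall_notMem]
    rintro q ⟨⟨s, t, hs, ht, hst, hq⟩, ⟨s', t', hs', ht', hst', hq'⟩⟩
    have e0 := congrArg (fun z : EuclideanSpace ℝ (Fin 2) => z 0) (hq.trans hq'.symm)
    have e1 := congrArg (fun z : EuclideanSpace ℝ (Fin 2) => z 1) (hq.trans hq'.symm)
    simp at e0 e1
    have p1 := mul_pos hs' hx
    have p2 := mul_pos ht' hy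
    have hs1 : s = 1 - t := by linarith
    have hs1' : s' = 1 - t' := by linarith
    subst hs1 hs1'
    have : (1 - t') * ((b.1 0 - a.1 0) * (x.1 1 - a.1 1) - (b.1 1 - a.1 1) * (x.1 0 - a.1 0)) +
      t' * ((b.1 0 - a.1 0) * (y.1 1 - a.1 1) - (b.1 1 - a.1 1) * (y.1 0 - a.1 0)) = 0 := by
      linear_combination (b.1 1 - a.1 1) * e0 - (b.1 0 - a.1 0) * e1
    linarith
  · intro a b x y h
    rw [openSegment_symm]; exact h
  · intro a b x y h
    rw [Set.inter_comm]; exact h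

/-- if `G` is the complete geometric graph on `n ≥ 3` points in general position
with exactly one point interior to the convex hull and `c` is a colouring of the edges of `G`
with exactly `C(n,2) - n + 1` colours, then `G` contains a heterochromatic plane spanning
tree. -/
theorem heterochromatic_plane_tree_one_interior (P : Finset (EuclideanSpace ℝ (Fin 2)))
    (hcard : 3 ≤ P.card)
    (hgen : ∀ p ∈ P, ∀ q ∈ P, ∀ r ∈ P, p ≠ q → q ≠ r → p ≠ r →
      ¬ Collinear ℝ ({p, q, r} : Set (EuclideanSpace ℝ (Fin 2))))
    (w : EuclideanSpace ℝ (Fin 2)) (hwP : w ∈ P)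
    (hwInt : w ∈ interior (convexHull ℝ (↑P : Set (EuclideanSpace ℝ (Fin 2)))))
    (hwUnique : ∀ p ∈ P, p ≠ w →
      p ∉ interior (convexHull ℝ (↑P : Set (EuclideanSpace ℝ (Fin 2)))))
    (c : Sym2 ↥P → Fin (P.card.choose 2 - P.card + 1))
    (hc : Set.SurjOn c (⊤ : SimpleGraph ↥P).edgeSet Set.univ) :
    ∃ T : SimpleGraph ↥P, IsPlaneSpanningTree T ∧ Set.InjOn c T.edgeSet := by
  classical
  have g := geo_concrete P hgen w hwP hwInt hwUnique
  let E : Finset (Sym2 ↥P) := (⊤ : SimpleGraph ↥P).edgeFinset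
  have hEmem : ∀ e, e ∈ E ↔ ¬ e.IsDiag := by
    intro e; simp [E]
  have hEcard : E.card = P.card.choose 2 := by
    have := SimpleGraph.card_edgeFinset_top_eq_card_choose_two (V := ↥P)
    rw [Fintype.card_coe] at this
    convert this
  have hchoose : P.card ≤ P.card.choose 2 := by
    rw [Nat.choose_two_right, Nat.le_div_iff_mul_le (by norm_num)]
    exact Nat.mul_le_mul_left _ (by omega)
  let Rep : Finset (Sym2 ↥P) → Prop := fun R => R ⊆ E ∧ R.card + 1 = Fintype.card ↥P ∧
    (∀ e ∈ E, ∀ f ∈ E, e ∉ R → f ∉ R → c e = c f → e = f) ∧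
    (∀ e ∈ E, ∃ f ∈ E, f ∉ R ∧ c f = c e)
  have hex : ∃ R, Rep R := by
    have hch : ∀ k, ∃ e ∈ E, c e = k := by
      intro k
      obtain ⟨e, he, hk⟩ := hc (Set.mem_univ k)
      exact ⟨e, by simpa [E] using he, hk⟩
    choose s hsE hs using hch
    have hinj : Function.Injective s := fun a b h => by rw [← hs a, ← hs b, h]
    refine ⟨E \ Finset.univ.image s, Finset.sdiff_subset, ?_, ?_, ?_⟩
    · rw [Finset.card_sdiff_of_subset, Finset.card_image_of_injective _ hinj, hEcard,
        Fintype.card_coe, Finset.card_univ, Fintype.card_fin]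
      · omega
      · intro e he
        obtain ⟨k, -, rfl⟩ := Finset.mem_image.1 he
        exact hsE k
    · intro e he f hf he' hf' hef
      simp only [Finset.mem_sdiff, he, hf, true_and, not_not, Finset.mem_image,
        Finset.mem_univ] at he' hf'
      obtain ⟨k, rfl⟩ := he'
      obtain ⟨l, rfl⟩ := hf'
      rw [hs, hs] at hef
      rw [hef]
    · intro e he
      exact ⟨s (c e), hsE _, by simp, hs _⟩
  obtain ⟨R0, hR0⟩ := hex
  obtain ⟨R, hR, T, hT1, hT2, hT3⟩ := combi g (by rw [Fintype.card_coe]; exact hcard) Rep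
    (fun R h => h.2.1) (fun R h e he => (hEmem e).1 (h.1 he)) (by
      rintro R ⟨h1, h2, h3, h4⟩ e he
      obtain ⟨f, hf, hfR, hfe⟩ := h4 e (h1 he)
      have hef : e ≠ f := by rintro rfl; exact hfR he
      refine ⟨f, hfR, (hEmem f).1 hf, ?_, ?_, ?_, ?_⟩
      · intro x hx
        rcases Finset.mem_insert.1 hx with rfl | hx
        · exact hf
        · exact h1 (Finset.mem_of_mem_erase hx)
      · rw [Finset.card_insert_of_notMem (fun h => hfR (Finset.mem_of_mem_erase h)),
          Finset.card_erase_add_one he, h2]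
      · intro x hx z hz hx' hz' hxz
        simp only [Finset.mem_insert, Finset.mem_erase, not_or, not_and, not_imp_not] at hx' hz'
        by_cases hxR : x ∈ R
        · have hxe := hx'.2 hxR
          by_cases hzR : z ∈ R
          · exact hxe.trans (hz'.2 hzR).symm
          · exact absurd (h3 z hz f hf hzR hfR (by rw [hfe, ← hxz, hxe])) hz'.1
        · by_cases hzR : z ∈ R
          · exact absurd (h3 x hx f hf hxR hfR (by rw [hfe, hxz, hz'.2 hzR])) hx'.1
          · exact h3 x hx z hz hxR hzR hxz
      · intro x hx
        obtain ⟨z, hz, hzR, hzx⟩ := h4 x hx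
        by_cases hzf : z = f
        · refine ⟨e, h1 he, ?_, by rw [← hfe, ← hzf, hzx]⟩
          simp [hef]
        · refine ⟨z, hz, ?_, hzx⟩
          simp [hzf, hzR]) R0 hR0
  have hconn : T.Connected := by
    have : Nonempty ↥P := ⟨⟨w, hwP⟩⟩
    exact ⟨fun a b => hT3 a (Finset.mem_univ _) b (Finset.mem_univ _)⟩
  obtain ⟨T', hle, htree⟩ := hconn.exists_isTree_le
  refine ⟨T', ⟨htree, ?_⟩, ?_⟩
  · intro a b x y h1 h2
    exact hT2 a b x y (hle h1) (hle h2)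
  · have hmem : ∀ e ∈ T'.edgeSet, e ∈ E ∧ e ∉ R := by
      intro e
      induction e using Sym2.ind with
      | _ a b =>
        intro h
        have h : T'.Adj a b := h
        exact ⟨(hEmem _).2 (by simpa using h.ne), (hT1 a b (hle h)).2.2⟩
    intro e he f hf hef
    exact hR.2.2.1 e (hmem e he).1 f (hmem f hf).1 (hmem e he).2 (hmem f hf).2 hef
end
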